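/- arXiv:1501.04008 — 4 statements merged into one kernel-verified Lean document; each statement's English description precedes it below -/
import Mathlib

section
/- For every Swiss cheese D with δ(D) > 0, there exists a classical Swiss cheese D' with X_{D'} ⊆ X_D and δ(D') ≥ δ(D). -/
/-- An open disc in the complex plane: a set of the form `B(z,r)` with `r > 0`. -/
def IsOpenDisc (D : Set ℂ) : Prop := ∃ z : ℂ, ∃ r : ℝ, 0 < r ∧ D = Metric.ball z r

/-- A closed disc in the complex plane: `{w : |w - z| ≤ r}` with `r > 0`. -/
def IsClosedDisc (D : Set ℂ) : Prop := ∃ z : ℂ, ∃ r : ℝ, 0 < r ∧ D = Metric.closedBall z r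

/-- The radius of a disc, computed as half its diameter (so `r = 0` for `∅` or singletons). -/
noncomputable def discRadius (D : Set ℂ) : ℝ := Metric.diam D / 2

/-- A Swiss cheese: a closed disc `Δ` together with a countable collection `𝒟` of open discs. -/
structure SwissCheese where
  Δ : Set ℂ
  𝒟 : Set (Set ℂ)
  hΔ : IsClosedDisc Δ
  h𝒟 : ∀ D ∈ 𝒟, IsOpenDisc D
  hcount : 𝒟.Countable

/-- `D̃ = 𝒟 ∪ {ℂ ∖ Δ}`. -/
def SwissCheese.tilde (D : SwissCheese) : Set (Set ℂ) := D.𝒟 ∪ {D.Δᶜ}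

/-- The associated Swiss cheese set `X_D = Δ ∖ ⋃ 𝒟`. -/
def SwissCheese.X (D : SwissCheese) : Set ℂ := D.Δ \ ⋃₀ D.𝒟

/-- The (possibly infinite) sum of the radii of a collection of discs. -/
noncomputable def radSum (S : Set (Set ℂ)) : ENNReal :=
  ∑' D : S, ENNReal.ofReal (discRadius D)

/-- `δ(D) = r(Δ) − Σ_{D'∈𝒟} r(D')`, possibly `−∞`. -/
noncomputable def SwissCheese.delta (D : SwissCheese) : EReal :=
  (discRadius D.Δ : EReal) - ((radSum D.𝒟 : ENNReal) : EReal)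

/-- An allocation map between Swiss cheeses. -/
structure IsAllocationMap (D E : SwissCheese) (f : Set ℂ → Set ℂ) : Prop where
  maps_to : ∀ U ∈ D.tilde, f U ∈ E.tilde
  a1 : ∀ U ∈ D.tilde, U ⊆ f U
  a2 : ENNReal.ofReal (discRadius D.Δ - discRadius E.Δ) ≤
      radSum {U | U ∈ D.𝒟 ∧ f U = E.Δᶜ}
  a3 : ∀ E' ∈ E.𝒟, ENNReal.ofReal (discRadius E') ≤ radSum {U | U ∈ D.𝒟 ∧ f U = E'}

/-- A Swiss cheese is classical if the closures of the discs in `𝒟` intersect neither one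
another nor `ℂ ∖ int Δ`, and the sum of the radii is finite. -/
def SwissCheese.IsClassical (D : SwissCheese) : Prop :=
  (∀ D1 ∈ D.𝒟, ∀ D2 ∈ D.𝒟, D1 ≠ D2 → closure D1 ∩ closure D2 = ∅) ∧
  (∀ D' ∈ D.𝒟, closure D' ⊆ interior D.Δ) ∧
  radSum D.𝒟 < ⊤


namespace CheeseProof

open Metric

/-- Admissibility of the centre `z` for the block `C` of weight `s`. -/
def OK {I : Type} (a : I → ℂ) (r : I → ℝ) (c : ℂ) (R : ℝ)
    (C : Set (Option I)) (s : ℝ) (z : ℂ) : Prop :=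
  (none ∈ C → dist z c ≤ s ∧ ∀ i, some i ∈ C → r i + R - s ≤ dist z (a i)) ∧
  (none ∉ C → ∀ i, some i ∈ C → dist z (a i) + r i ≤ s)

/-- One single constraint. -/
def phi {I : Type} (a : I → ℂ) (r : I → ℝ) (c : ℂ) (R : ℝ)
    (b : Prop) (s : ℝ) : Option I → Set ℂ
  | none => {z | b → dist z c ≤ s}
  | some i => {z | (b → r i + R - s ≤ dist z (a i)) ∧ (¬ b → dist z (a i) + r i ≤ s)}

lemma ok_iff {I : Type} (a : I → ℂ) (r : I → ℝ) (c : ℂ) (R : ℝ)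
    (C : Set (Option I)) (s : ℝ) (z : ℂ) :
    OK a r c R C s z ↔ ∀ u ∈ C, z ∈ phi a r c R (none ∈ C) s u := by
  constructor
  · rintro ⟨h1, h2⟩ u hu
    cases u with
    | none => exact fun h => (h1 h).1
    | some i => exact ⟨fun h => (h1 h).2 i hu, fun h => h2 h i hu⟩
  · intro h
    exact ⟨fun hn => ⟨h none hn hn, fun i hi => (h _ hi).1 hn⟩, fun hn i hi => (h _ hi).2 hn⟩

lemma phi_mono {I : Type} (a : I → ℂ) (r : I → ℝ) (c : ℂ) (R : ℝ)
    (b : Prop) {s t : ℝ} (h : s ≤ t) (u : Option I) :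
    phi a r c R b s u ⊆ phi a r c R b t u := by
  cases u with
  | none => exact fun z hz hb => (hz hb).trans h
  | some i => exact fun z hz => ⟨fun hb => by linarith [hz.1 hb], fun hb => by linarith [hz.2 hb]⟩

lemma phi_closed {I : Type} (a : I → ℂ) (r : I → ℝ) (c : ℂ) (R : ℝ)
    (b : Prop) (s : ℝ) (u : Option I) : IsClosed (phi a r c R b s u) := by
  by_cases hb : b
  · cases u with
    | none =>
      simp only [phi, hb, forall_const]
      exact isClosed_le (by fun_prop) (by fun_prop)
    | some i =>
      simp only [phi, hb, forall_const, not_true_eq_false, false_imp_iff, and_true]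
      exact isClosed_le (by fun_prop) (by fun_prop)
  · cases u with
    | none => simp [phi, hb]
    | some i =>
      simp only [phi, hb, forall_const, not_false_eq_true, false_imp_iff, true_and]
      exact isClosed_le (by fun_prop) (by fun_prop)

lemma phi_compact {I : Type} (a : I → ℂ) (r : I → ℝ) (c : ℂ) (R : ℝ)
    (C : Set (Option I)) (hC : C.Nonempty) (s : ℝ) :
    ∃ u ∈ C, IsCompact (phi a r c R (none ∈ C) s u) := by
  by_cases hb : none ∈ C
  · refine ⟨none, hb, (isCompact_closedBall c s).of_isClosed_subset (phi_closed _ _ _ _ _ _ _) ?_⟩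
    intro z hz
    exact hz hb
  · obtain ⟨u, hu⟩ := hC
    refine ⟨u, hu, ?_⟩
    cases u with
    | none => exact absurd hu hb
    | some i =>
      refine (isCompact_closedBall (a i) (s - r i)).of_isClosed_subset
        (phi_closed _ _ _ _ _ _ _) ?_
      intro z hz
      have := hz.2 hb
      rw [mem_closedBall]
      linarith

lemma ok_limit {I : Type} (a : I → ℂ) (r : I → ℝ) (c : ℂ) (R : ℝ)
    (S : Set (Option I) → ℝ) (hmono : ∀ A B, A ⊆ B → S A ≤ S B)
    (C : Set (Option I)) (hC : C.Nonempty)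
    (h : ∀ F : Finset (Option I), (F : Set (Option I)) ⊆ C →
      ∃ A, (F : Set (Option I)) ⊆ A ∧ A ⊆ C ∧ ∃ z, OK a r c R A (S A) z) :
    ∃ z, OK a r c R C (S C) z := by
  classical
  obtain ⟨u, hu, hK⟩ := phi_compact a r c R C hC (S C)
  have key := hK.inter_iInter_nonempty (fun v : C => phi a r c R (none ∈ C) (S C) v)
    (fun v => phi_closed _ _ _ _ _ _ _) ?_
  · obtain ⟨z, -, hz⟩ := key
    refine ⟨z, (ok_iff _ _ _ _ _ _ _).2 fun v hv => ?_⟩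
    exact Set.mem_iInter.1 hz ⟨v, hv⟩
  · intro F
    let F' : Finset (Option I) :=
      insert u (F.image Subtype.val) ∪ (if none ∈ C then {none} else ∅)
    obtain ⟨A, hFA, hAC, z, hz⟩ := h F' (by
      intro v hv
      simp only [F', Finset.coe_union, Finset.coe_insert, Set.mem_union, Set.mem_insert_iff,
        Finset.mem_coe, Finset.mem_image] at hv
      rcases hv with (rfl | ⟨w, _, rfl⟩) | hv
      · exact hu
      · exact w.2
      · split_ifs at hv with hn
        · simp at hv; rwa [hv]
        · simp at hv)
    have hn : (none ∈ A) = (none ∈ C) := by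
      apply propext
      refine ⟨fun h => hAC h, fun h => hFA ?_⟩
      simp [F', h]
    rw [ok_iff, hn] at hz
    have hz' : ∀ v ∈ A, z ∈ phi a r c R (none ∈ C) (S C) v :=
      fun v hv => phi_mono _ _ _ _ _ (hmono _ _ hAC) _ (hz v hv)
    refine ⟨z, hz' u (hFA (by simp [F'])), ?_⟩
    simp only [Set.mem_iInter]
    intro v hv
    exact hz' v (hFA (by simp [F', hv]))

lemma exists_away (x y : ℂ) (s : ℝ) (hs : 0 ≤ s) :
    ∃ z, dist z x ≤ s ∧ dist x y + s ≤ dist z y := by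
  by_cases h : x = y
  · subst h
    exact ⟨x + s, by simp [abs_of_nonneg hs], by simp [abs_of_nonneg hs]⟩
  · have hd : 0 < ‖x - y‖ := norm_pos_iff.2 (sub_ne_zero.2 h)
    refine ⟨x + ((s / ‖x - y‖ : ℝ) : ℂ) * (x - y), ?_, ?_⟩
    · rw [dist_eq_norm, add_sub_cancel_left, norm_mul, Complex.norm_real, Real.norm_eq_abs,
        abs_of_nonneg (by positivity), div_mul_cancel₀ _ hd.ne']
    · rw [dist_eq_norm, dist_eq_norm]
      have : x + ((s / ‖x - y‖ : ℝ) : ℂ) * (x - y) - y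
          = ((1 + s / ‖x - y‖ : ℝ) : ℂ) * (x - y) := by push_cast; ring
      rw [this, norm_mul, Complex.norm_real, Real.norm_eq_abs, abs_of_nonneg (by positivity),
        add_mul, div_mul_cancel₀ _ hd.ne', one_mul]

lemma ok_merge {I : Type} (a : I → ℂ) (r : I → ℝ) (c : ℂ) (R : ℝ)
    (A B : Set (Option I)) (hA : none ∉ A) (hB : none ∉ B) (s t : ℝ) (hs : 0 ≤ s) (ht : 0 ≤ t)
    (x y : ℂ) (hx : OK a r c R A s x) (hy : OK a r c R B t y) (hd : dist x y ≤ s + t) :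
    ∃ z, OK a r c R (A ∪ B) (s + t) z := by
  obtain ⟨z, h1, h2⟩ := exists_dist_le_le ht hs hd
  refine ⟨z, fun h => absurd h (by simp [hA, hB]), fun _ i hi => ?_⟩
  rcases hi with hi | hi
  · have := hx.2 hA i hi
    have := dist_triangle z x (a i)
    rw [dist_comm z x] at this
    linarith
  · have := hy.2 hB i hi
    have := dist_triangle z y (a i)
    linarith

lemma ok_merge_none {I : Type} (a : I → ℂ) (r : I → ℝ) (c : ℂ) (R : ℝ)
    (A B : Set (Option I)) (hA : none ∈ A) (hB : none ∉ B) (s t : ℝ) (ht : 0 ≤ t)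
    (x y : ℂ) (hx : OK a r c R A s x) (hy : OK a r c R B t y) (hd : R - s ≤ dist x y + t) :
    ∃ z, OK a r c R (A ∪ B) (s + t) z := by
  obtain ⟨z, h1, h2⟩ := exists_away x y t ht
  refine ⟨z, fun _ => ⟨?_, fun i hi => ?_⟩, fun h => absurd (Or.inl hA) h⟩
  · have := (hx.1 hA).1
    have := dist_triangle z x c
    linarith
  rcases hi with hi | hi
  · have := (hx.1 hA).2 i hi
    have := dist_triangle x z (a i)
    rw [dist_comm x z] at this
    linarith
  · have := hy.2 hB i hi
    have := dist_triangle z (a i) y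
    rw [dist_comm (a i) y] at this
    linarith

/-- Merge the classes of `x` and `y`. -/
def mergeS {T : Type} (P : Setoid T) (x y : T) : Setoid T where
  r u v := P.r u v ∨ ((P.r x u ∨ P.r y u) ∧ (P.r x v ∨ P.r y v))
  iseqv := by
    refine ⟨fun u => Or.inl (P.refl u), ?_, ?_⟩
    · rintro u v (h | h)
      · exact Or.inl (P.symm h)
      · exact Or.inr h.symm
    · rintro u v w (h | h) (h' | h')
      · exact Or.inl (P.trans h h')
      · exact Or.inr ⟨h'.1.imp (fun k => P.trans k (P.symm h)) (fun k => P.trans k (P.symm h)), h'.2⟩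
      · exact Or.inr ⟨h.1, h.2.imp (fun k => P.trans k h') (fun k => P.trans k h')⟩
      · exact Or.inr ⟨h.1, h'.2⟩

/-- The class of `u`. -/
def cls {T : Type} (P : Setoid T) (u : T) : Set T := {v | P.r u v}

lemma merge_good {T : Type} (P : Setoid T) (x y : T) (G : Set T → Prop)
    (hG : ∀ u, G (cls P u)) (hxy : G (cls P x ∪ cls P y)) (u : T) : G (cls (mergeS P x y) u) := by
  by_cases h : P.r x u ∨ P.r y u
  · convert hxy using 1
    ext v
    constructor
    · rintro (k | k)
      · exact h.imp (fun l => P.trans l k) (fun l => P.trans l k)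
      · exact k.2
    · intro k
      exact Or.inr ⟨h, k⟩
  · convert hG u using 1
    ext v
    constructor
    · rintro (k | k)
      · exact k
      · exact absurd k.1 h
    · exact Or.inl

lemma core {I : Type} (a : I → ℂ) (r : I → ℝ) (c : ℂ) (R : ℝ)
    (S : Set (Option I) → ℝ) (hmono : ∀ A B, A ⊆ B → S A ≤ S B)
    (hadd : ∀ A B, Disjoint A B → S (A ∪ B) = S A + S B) (h0 : ∀ A, 0 ≤ S A)
    (hr : ∀ i, r i ≤ S {some i}) :
    ∃ P : Setoid (Option I), ∃ ζ : Option I → ℂ,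
      (∀ u, OK a r c R (cls P u) (S (cls P u)) (ζ u)) ∧
      (∀ u v, ¬ P.r u v → ¬ P.r u none → ¬ P.r v none →
        S (cls P u) + S (cls P v) < dist (ζ u) (ζ v)) ∧
      (∀ u, ¬ P.r u none → dist (ζ none) (ζ u) + S (cls P u) < R - S (cls P none)) := by
  obtain ⟨P, hP⟩ := zorn_le₀ {P : Setoid (Option I) | ∀ u, ∃ z, OK a r c R (cls P u) (S (cls P u)) z} (by
    intro ch hch hchain
    by_cases hne : ch.Nonempty
    swap
    · rw [Set.not_nonempty_iff_eq_empty] at hne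
      subst hne
      refine ⟨⊥, fun u => ?_, by simp⟩
      have hcl : cls (⊥ : Setoid (Option I)) u = {u} := by
        ext v
        exact eq_comm
      rw [hcl]
      cases u with
      | none => exact ⟨c, by simp [OK, h0]⟩
      | some i => exact ⟨a i, by simpa [OK] using hr i⟩
    let Q : Setoid (Option I) :=
      { r := fun u v => ∃ P ∈ ch, P.r u v
        iseqv := by
          refine ⟨fun u => ⟨_, hne.some_mem, Setoid.refl' _ u⟩, ?_, ?_⟩
          · rintro u v ⟨P, hP, h⟩
            exact ⟨P, hP, P.symm h⟩
          · rintro u v w ⟨P, hP, h⟩ ⟨P', hP', h'⟩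
            rcases hchain.total hP hP' with hle | hle
            · exact ⟨P', hP', P'.trans (hle h) h'⟩
            · exact ⟨P, hP, P.trans h (hle h')⟩ }
    refine ⟨Q, fun u => ?_, fun P hP u v h => ⟨P, hP, h⟩⟩
    refine ok_limit a r c R S hmono (cls Q u) ⟨u, Q.refl u⟩ fun F hF => ?_
    have : ∃ P ∈ ch, (F : Set (Option I)) ⊆ cls P u := by
      classical
      induction F using Finset.induction_on with
      | empty => exact ⟨_, hne.some_mem, by simp⟩
      | insert v F hv ih =>
        rw [Finset.coe_insert, Set.insert_subset_iff] at hF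
        obtain ⟨P, hP, h⟩ := ih hF.2
        obtain ⟨P', hP', h'⟩ := hF.1
        rcases hchain.total hP hP' with hle | hle
        · refine ⟨P', hP', ?_⟩
          rw [Finset.coe_insert, Set.insert_subset_iff]
          exact ⟨h', fun w hw => hle (h hw)⟩
        · refine ⟨P, hP, ?_⟩
          rw [Finset.coe_insert, Set.insert_subset_iff]
          exact ⟨hle h', h⟩
    obtain ⟨P, hP, h⟩ := this
    exact ⟨cls P u, h, fun v hv => ⟨P, hP, hv⟩, hch hP u⟩)
  have hgood : ∀ u, ∃ z, OK a r c R (cls P u) (S (cls P u)) z := hP.prop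
  have hmax : ∀ x y, (∃ z, OK a r c R (cls P x ∪ cls P y) (S (cls P x ∪ cls P y)) z) → P.r x y := by
    intro x y h
    have h1 := merge_good P x y (fun C => ∃ z, OK a r c R C (S C) z) hgood h
    have h2 : P ≤ mergeS P x y := fun _ _ h => Or.inl h
    exact hP.le_of_ge h1 h2 (Or.inr ⟨Or.inl (P.refl x), Or.inr (P.refl y)⟩)
  have hdis : ∀ x y, ¬ P.r x y → Disjoint (cls P x) (cls P y) := by
    intro x y h
    rw [Set.disjoint_left]
    intro v h1 h2
    exact h (P.trans h1 (P.symm h2))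
  choose ζ hζ using hgood
  refine ⟨P, ζ, hζ, ?_, ?_⟩
  · intro u v huv hu hv
    by_contra hcon
    apply huv
    apply hmax
    rw [hadd _ _ (hdis _ _ huv)]
    exact ok_merge a r c R _ _ hu hv _ _ (h0 _) (h0 _) _ _ (hζ u) (hζ v) (not_lt.1 hcon)
  · intro u hu
    have hu' : ¬ P.r none u := fun h => hu (P.symm h)
    by_contra hcon
    apply hu'
    apply hmax
    rw [hadd _ _ (hdis _ _ hu')]
    exact ok_merge_none a r c R _ _ (P.refl _) hu _ _ (h0 _) _ _ (hζ none) (hζ u) (not_lt.1 hcon)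

lemma discRadius_ball (z : ℂ) {s : ℝ} (hs : 0 ≤ s) : discRadius (ball z s) = s := by
  rw [discRadius, diam_ball_eq _ hs]; ring

lemma discRadius_closedBall (z : ℂ) {s : ℝ} (hs : 0 ≤ s) : discRadius (closedBall z s) = s := by
  rw [discRadius, diam_closedBall_eq _ hs]; ring

end CheeseProof

theorem exists_classical_swiss_cheese (D : SwissCheese) (hδ : 0 < D.delta) :
    ∃ D' : SwissCheese, D'.IsClassical ∧ D'.X ⊆ D.X ∧ D.delta ≤ D'.delta := by
  classical
  obtain ⟨c, R, hR, hΔ⟩ := D.hΔ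
  have hrad : discRadius D.Δ = R := by rw [hΔ, CheeseProof.discRadius_closedBall _ hR.le]
  have hdelta : D.delta = (R : EReal) - ((radSum D.𝒟 : ENNReal) : EReal) := by
    rw [SwissCheese.delta, hrad]
  have htop : radSum D.𝒟 ≠ ⊤ := by
    intro h
    rw [hdelta, h] at hδ
    simp at hδ
  obtain ⟨T, hT0, hT⟩ : ∃ T : ℝ, 0 ≤ T ∧ radSum D.𝒟 = ENNReal.ofReal T :=
    ⟨_, ENNReal.toReal_nonneg, (ENNReal.ofReal_toReal htop).symm⟩
  have hTe : ∀ t : ℝ, 0 ≤ t → ((ENNReal.ofReal t : ENNReal) : EReal) = (t : EReal) := by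
    intro t ht
    rw [EReal.coe_ennreal_ofReal, max_eq_left ht]
  have hTR : T < R := by
    rw [hdelta, hT, hTe T hT0, ← EReal.coe_sub] at hδ
    have : 0 < R - T := by exact_mod_cast hδ
    linarith
  let I : Type := D.𝒟
  have hI : ∀ i : I, ∃ z : ℂ, ∃ r : ℝ, 0 < r ∧ i.1 = Metric.ball z r := fun i => D.h𝒟 i.1 i.2
  choose a r hr0 hball using hI
  have hri : ∀ i : I, discRadius i.1 = r i := fun i => by
    rw [hball, CheeseProof.discRadius_ball _ (hr0 i).le]
  let W : Option I → ENNReal := fun u => u.elim 0 (fun i => ENNReal.ofReal (r i))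
  let M : Set (Option I) → ENNReal := fun C => ∑' v : C, W v
  have hWT : ∑' v, W v = ENNReal.ofReal T := by
    rw [← hT, radSum]
    have h1 : ∑' v, W v = ∑' i : I, W (some i) := by
      refine (Function.Injective.tsum_eq (Option.some_injective I) ?_).symm
      intro v hv
      cases v with
      | none => exact absurd rfl hv
      | some i => exact ⟨i, rfl⟩
    rw [h1]
    exact tsum_congr fun i => by rw [hri i]; rfl
  have hMT : ∀ C, M C ≤ ENNReal.ofReal T := by
    intro C
    rw [← hWT]
    exact ENNReal.tsum_comp_le_tsum_of_injective Subtype.val_injective W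
  have hMtop : ∀ C, M C ≠ ⊤ := fun C => ne_top_of_le_ne_top ENNReal.ofReal_ne_top (hMT C)
  obtain ⟨P, ζ, hok, hsep, hin⟩ := CheeseProof.core a r c R (fun C => (M C).toReal)
    (fun A B h => ENNReal.toReal_mono (hMtop B) (ENNReal.tsum_mono_subtype W h))
    (fun A B h => by
      rw [← ENNReal.toReal_add (hMtop A) (hMtop B)]
      congr 1
      exact ENNReal.summable.tsum_union_disjoint h ENNReal.summable)
    (fun A => ENNReal.toReal_nonneg)
    (fun i => by
      have : M {some i} = ENNReal.ofReal (r i) := tsum_singleton (some i) W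
      rw [this, ENNReal.toReal_ofReal (hr0 i).le])
  set S : Option I → ℝ := fun u => (M (CheeseProof.cls P u)).toReal with hS
  have hS0 : ∀ u, 0 ≤ S u := fun u => ENNReal.toReal_nonneg
  have hST : ∀ u, S u ≤ T := fun u => ENNReal.toReal_le_of_le_ofReal hT0 (hMT _)
  have hMS : ∀ u, M (CheeseProof.cls P u) = ENNReal.ofReal (S u) :=
    fun u => (ENNReal.ofReal_toReal (hMtop _)).symm
  have hSr : ∀ u i, P.r u (some i) → r i ≤ S u := by
    intro u i h
    have : ENNReal.ofReal (r i) ≤ M (CheeseProof.cls P u) :=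
      ENNReal.le_tsum (f := fun v : CheeseProof.cls P u => W v) ⟨some i, h⟩
    rw [hMS] at this
    exact (ENNReal.ofReal_le_ofReal_iff (hS0 u)).1 this
  have hSpos : ∀ u, ¬ P.r u none → 0 < S u := by
    intro u hu
    cases u with
    | none => exact absurd (P.refl _) hu
    | some i => exact (hr0 i).trans_le (hSr _ i (P.refl _))
  let J : Set (Quotient P) := {Quotient.mk P none}ᶜ
  have hJ : ∀ q : J, ¬ P.r q.1.out none := by
    intro q h
    apply q.2
    rw [Set.mem_singleton_iff, ← q.1.out_eq]
    exact Quotient.sound h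
  let f : J → Set ℂ := fun q => Metric.ball (ζ q.1.out) (S q.1.out)
  have : Countable I := D.hcount.to_subtype
  have hcntQ : Countable (Quotient P) := inferInstance
  have hρ : 0 < R - S none := by linarith [hST none]
  let D' : SwissCheese :=
    { Δ := Metric.closedBall (ζ none) (R - S none)
      𝒟 := Set.range f
      hΔ := ⟨_, _, hρ, rfl⟩
      h𝒟 := by
        rintro _ ⟨q, rfl⟩
        exact ⟨_, _, hSpos _ (hJ q), rfl⟩
      hcount := Set.countable_range f }
  have hsum : ENNReal.ofReal (S none) + radSum D'.𝒟 ≤ ENNReal.ofReal T := by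
    have h1 : radSum D'.𝒟 ≤ ∑' q : J, M (CheeseProof.cls P q.1.out) := by
      refine (ENNReal.tsum_le_tsum_comp_of_surjective (f := Set.rangeFactorization f)
        Set.rangeFactorization_surjective _).trans (le_of_eq (tsum_congr fun q => ?_))
      rw [hMS, Set.rangeFactorization_coe, CheeseProof.discRadius_ball _ (hS0 _)]
    have h2 : ∑' q : Quotient P, M {v | Quotient.mk P v = q} = ENNReal.ofReal T := by
      rw [← hWT, ← (Equiv.sigmaFiberEquiv (Quotient.mk P)).tsum_eq, ENNReal.tsum_sigma']
      rfl
    have h3 : ∀ q : Quotient P, ∀ u, Quotient.mk P u = q →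
        M {v | Quotient.mk P v = q} = M (CheeseProof.cls P u) := by
      rintro q u rfl
      congr 1
      ext v
      exact Quotient.eq.trans ⟨fun h => P.symm h, fun h => P.symm h⟩
    rw [← h2, ← ENNReal.summable.tsum_add_tsum_compl (s := {Quotient.mk P none}) ENNReal.summable,
      tsum_singleton (Quotient.mk P none) (fun q => M {v | Quotient.mk P v = q}),
      h3 _ none rfl, hMS]
    refine add_le_add le_rfl (h1.trans (le_of_eq (tsum_congr fun q => ?_)))
    exact (h3 _ _ q.1.out_eq).symm
  have hfin : radSum D'.𝒟 ≠ ⊤ :=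
    ne_top_of_le_ne_top ENNReal.ofReal_ne_top (le_add_self.trans hsum)
  refine ⟨D', ⟨?_, ?_, hfin.lt_top⟩, ?_, ?_⟩
  · rintro _ ⟨q, rfl⟩ _ ⟨q', rfl⟩ hne
    have hqq : ¬ P.r q.1.out q'.1.out := by
      intro h
      apply hne
      have : q.1 = q'.1 := by
        rw [← q.1.out_eq, ← q'.1.out_eq]
        exact Quotient.sound h
      rw [Subtype.ext this]
    have h := hsep _ _ hqq (hJ q) (hJ q')
    have hd : Disjoint (closure (f q)) (closure (f q')) :=
      (Metric.closedBall_disjoint_closedBall h).mono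
        Metric.closure_ball_subset_closedBall Metric.closure_ball_subset_closedBall
    exact hd.inter_eq
  · rintro _ ⟨q, rfl⟩
    refine Metric.closure_ball_subset_closedBall.trans
      (Set.Subset.trans ?_ Metric.ball_subset_interior_closedBall)
    have h := hin _ (hJ q)
    refine Metric.closedBall_subset_ball' ?_
    rw [dist_comm]
    linarith
  · rintro z ⟨hz, hz'⟩
    have hz1 : dist z (ζ none) ≤ R - S none := hz
    have hn := (hok none).1 (P.refl _)
    refine ⟨?_, ?_⟩
    · rw [hΔ, Metric.mem_closedBall]
      have := dist_triangle z (ζ none) c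
      linarith [hn.1]
    · rintro ⟨B, hB, hzB⟩
      let i : I := ⟨B, hB⟩
      have hzi : dist z (a i) < r i := by
        have : z ∈ i.1 := hzB
        rw [hball i] at this
        exact this
      by_cases hi : P.r none (some i)
      · have h1 := hn.2 i hi
        have h2 := dist_triangle_left (ζ none) (a i) z
        linarith
      · let q : J := ⟨Quotient.mk P (some i), fun h => hi (P.symm (Quotient.exact h))⟩
        apply hz'
        refine ⟨f q, ⟨q, rfl⟩, ?_⟩
        have h1 := (hok q.1.out).2 (hJ q) i (Quotient.exact q.1.out_eq)
        have h2 := dist_triangle_right z (ζ q.1.out) (a i)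
        rw [Metric.mem_ball]
        linarith
  · obtain ⟨T', hT'0, hT'⟩ : ∃ T : ℝ, 0 ≤ T ∧ radSum D'.𝒟 = ENNReal.ofReal T :=
      ⟨_, ENNReal.toReal_nonneg, (ENNReal.ofReal_toReal hfin).symm⟩
    rw [hT', ← ENNReal.ofReal_add (hS0 _) hT'0, ENNReal.ofReal_le_ofReal_iff hT0] at hsum
    rw [hdelta, hT, hTe T hT0, SwissCheese.delta, hT', hTe T' hT'0,
      CheeseProof.discRadius_closedBall _ hρ.le, ← EReal.coe_sub, ← EReal.coe_sub,
      EReal.coe_le_coe_iff]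
    linarith
end

section
/- Let D = (Δ, 𝒟) be a Swiss cheese with δ(D) > 0 such that the associated Swiss cheese set X_D has empty interior in ℂ. Then X_D contains a subset homeomorphic to the Sierpiński carpet. -/
/-- The unit square `Q = [0,1]²` viewed in `ℂ`. -/
def unitSquare : Set ℂ := {z | z.re ∈ Set.Icc (0 : ℝ) 1 ∧ z.im ∈ Set.Icc (0 : ℝ) 1}

/-- The open square with lower-left corner `a` and side `l`. -/
def openSquare (a : ℂ) (l : ℝ) : Set ℂ :=
  {w | w.re ∈ Set.Ioo a.re (a.re + l) ∧ w.im ∈ Set.Ioo a.im (a.im + l)}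

/-- The Sierpiński carpet. -/
def sierpinskiCarpet : Set ℂ :=
  unitSquare \ ⋃ (k : ℕ) (m : Fin (3 ^ k)) (n : Fin (3 ^ k)),
    openSquare
      ((((3 : ℝ) ^ (k + 1))⁻¹ : ℝ) * (((3 * (m : ℕ) + 1 : ℕ) : ℂ) +
        ((3 * (n : ℕ) + 1 : ℕ) : ℂ) * Complex.I))
      (((3 : ℝ) ^ (k + 1))⁻¹)


/-! ### The direction field -/

noncomputable def dirVec (w : ℂ) : ℂ := (‖w‖⁻¹ : ℝ) • w

lemma norm_dirVec_le (w : ℂ) : ‖dirVec w‖ ≤ 1 := by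
  unfold dirVec
  rw [norm_smul, norm_inv, norm_norm]
  exact inv_mul_le_one

lemma dirVec_subgrad (w u : ℂ) : ‖w‖ + inner ℝ (dirVec w) (u - w) ≤ ‖u‖ := by
  have h1 : inner ℝ (dirVec w) w = ‖w‖ := by
    unfold dirVec
    rw [real_inner_smul_left, real_inner_self_eq_norm_sq]
    by_cases h : ‖w‖ = 0
    · simp [h]
    · field_simp
  have h2 : inner ℝ (dirVec w) u ≤ ‖u‖ := by
    have := real_inner_le_norm (dirVec w) u
    have h3 := norm_dirVec_le w
    nlinarith [norm_nonneg u]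
  rw [inner_sub_right, h1]
  linarith

lemma dirVec_continuousAt {w : ℂ} (hw : w ≠ 0) : ContinuousAt dirVec w := by
  unfold dirVec
  exact (continuousAt_id.norm.inv₀ (norm_ne_zero_iff.mpr hw)).smul continuousAt_id

/-- The map `T`. -/
noncomputable def pushMap {ι : Type*} (r : ι → ℝ) (y : ι → ℂ) (w : ℂ) : ℂ :=
  w + ∑' j, r j • dirVec (w - y j)

lemma summable_smul_dir {ι : Type*} {r : ι → ℝ}
    (hr : ∀ i, 0 < r i) (hs : Summable r) (y : ι → ℂ) (w : ℂ) :
    Summable (fun j => r j • dirVec (w - y j)) := by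
  refine Summable.of_norm_bounded hs (fun j => ?_)
  rw [norm_smul, Real.norm_of_nonneg (hr j).le]
  have := norm_dirVec_le (w - y j)
  nlinarith [hr j]

lemma summable_dist {ι : Type*} {r : ι → ℝ}
    (hr : ∀ i, 0 < r i) (hs : Summable r) {y : ι → ℂ} {M : ℝ} (hy : ∀ i, ‖y i‖ ≤ M) (w : ℂ) :
    Summable (fun j => r j * ‖w - y j‖) := by
  refine Summable.of_norm_bounded (hs.mul_right (‖w‖ + M)) (fun j => ?_)
  rw [norm_mul, Real.norm_of_nonneg (hr j).le, norm_norm]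
  have := norm_sub_le w (y j)
  have := hy j
  nlinarith [hr j]

lemma norm_pushMap_le {ι : Type*} {r : ι → ℝ}
    (hr : ∀ i, 0 < r i) (hs : Summable r) (y : ι → ℂ) (w : ℂ) : ‖pushMap r y w‖ ≤ ‖w‖ + ∑' j, r j := by
  unfold pushMap
  refine (norm_add_le _ _).trans ?_
  gcongr
  refine tsum_of_norm_bounded hs.hasSum (fun j => ?_)
  rw [norm_smul, Real.norm_of_nonneg (hr j).le]
  have := norm_dirVec_le (w - y j)
  nlinarith [hr j]

lemma pushMap_convex {ι : Type*} {r : ι → ℝ}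
    (hr : ∀ i, 0 < r i) (hs : Summable r) {y : ι → ℂ} {M : ℝ} (hy : ∀ i, ‖y i‖ ≤ M) (w u : ℂ) :
    ‖w‖ ^ 2 / 2 + ∑' j, r j * ‖w - y j‖ + inner ℝ (pushMap r y w) (u - w) + ‖u - w‖ ^ 2 / 2
      ≤ ‖u‖ ^ 2 / 2 + ∑' j, r j * ‖u - y j‖ := by
  have h1 : HasSum (fun j => inner ℝ (r j • dirVec (w - y j)) (u - w))
      (inner ℝ (∑' j, r j • dirVec (w - y j)) (u - w)) := by
    have := (summable_smul_dir hr hs y w).hasSum.mapL (innerSL ℝ (u - w))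
    simp only [real_inner_comm (u - w)]
    exact this
  have h2 := (summable_dist hr hs hy w).hasSum.add h1
  have h3 := hasSum_le (fun j => ?_) h2 (summable_dist hr hs hy u).hasSum
  · have h4 : ‖u‖ ^ 2 = ‖w‖ ^ 2 + 2 * inner ℝ w (u - w) + ‖u - w‖ ^ 2 := by
      have := norm_add_sq_real w (u - w)
      simpa using this
    unfold pushMap
    rw [inner_add_left]
    linarith
  · have := dirVec_subgrad (w - y j) (u - y j)
    rw [real_inner_smul_left]
    have h5 : u - y j - (w - y j) = u - w := by ring
    rw [h5] at this
    nlinarith [hr j]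

lemma pushMap_injective {ι : Type*} {r : ι → ℝ}
    (hr : ∀ i, 0 < r i) (hs : Summable r) {y : ι → ℂ} {M : ℝ} (hy : ∀ i, ‖y i‖ ≤ M) :
    Function.Injective (pushMap r y) := by
  intro w u h
  have h1 := pushMap_convex hr hs hy w u
  have h2 := pushMap_convex hr hs hy u w
  rw [h] at h1
  have h3 : inner ℝ (pushMap r y u) (w - u) = - inner ℝ (pushMap r y u) (u - w) := by
    rw [← inner_neg_right, neg_sub]
  rw [h3, norm_sub_rev w u] at h2
  have h4 : ‖u - w‖ ^ 2 ≤ 0 := by linarith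
  have h5 : ‖u - w‖ = 0 := by nlinarith [norm_nonneg (u - w)]
  exact (sub_eq_zero.mp (norm_eq_zero.mp h5)).symm

lemma pushMap_continuousOn {ι : Type*} {r : ι → ℝ}
    (hr : ∀ i, 0 < r i) (hs : Summable r) (y : ι → ℂ) {s : Set ℂ} (h : ∀ w ∈ s, ∀ i, w ≠ y i) :
    ContinuousOn (pushMap r y) s := by
  unfold pushMap
  refine continuousOn_id.add (continuousOn_tsum (u := r) (fun i => ?_) hs (fun j w _ => ?_))
  · intro w hw
    have h1 : ContinuousAt dirVec (w - y i) := dirVec_continuousAt (sub_ne_zero.mpr (h w hw i))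
    have h2 : ContinuousAt (fun w => w - y i) w := by fun_prop
    have h3 : ContinuousAt (fun w => dirVec (w - y i)) w :=
      ContinuousAt.comp (g := dirVec) (f := fun w => w - y i) h1 h2
    exact (h3.const_smul (r i)).continuousWithinAt
  · rw [norm_smul, Real.norm_of_nonneg (hr j).le]
    have := norm_dirVec_le (w - y j)
    nlinarith [hr j]

/-- Existence of the centres: coordinatewise minimality of a convex functional. -/
lemma exists_centres {ι : Type*} {r : ι → ℝ}
    (hr : ∀ i, 0 < r i) (hs : Summable r) (c : ι → ℂ) {C : ℝ} (hc : ∀ i, ‖c i‖ ≤ C) {M : ℝ} (hM : 0 ≤ M) :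
    ∃ y : ι → ℂ, (∀ i, ‖y i‖ ≤ M) ∧ ∀ i, ∀ u : ℂ, ‖u‖ ≤ M →
      ‖y i‖ ^ 2 / 2 - inner ℝ (c i) (y i) + ∑' j, r j * ‖y i - y j‖ ≤
      ‖u‖ ^ 2 / 2 - inner ℝ (c i) u + ∑' j, r j * ‖u - y j‖ - r i * ‖u - y i‖ := by
  classical
  set K : Set (ι → ℂ) := Set.univ.pi (fun _ => Metric.closedBall (0 : ℂ) M) with hK
  have hKc : IsCompact K := isCompact_univ_pi (fun _ => isCompact_closedBall _ _)
  have hKmem : ∀ y, y ∈ K ↔ ∀ i, ‖y i‖ ≤ M := by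
    intro y; simp [hK, Set.mem_pi]
  set a : (ι → ℂ) → ι → ℝ := fun y i => r i * (‖y i‖ ^ 2 / 2 - inner ℝ (c i) (y i)) with ha
  set b : (ι → ℂ) → ι × ι → ℝ := fun y p => r p.1 * r p.2 * ‖y p.1 - y p.2‖ with hb
  have hrr : Summable (fun p : ι × ι => r p.1 * r p.2) :=
    hs.mul_of_nonneg hs (fun i => (hr i).le) (fun i => (hr i).le)
  have ha_le : ∀ i, ∀ y ∈ K, ‖a y i‖ ≤ r i * (M ^ 2 / 2 + C * M) := by
    intro i y hy
    have h1 := (hKmem y).1 hy i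
    have h2 := abs_real_inner_le_norm (c i) (y i)
    have h3 : ‖c i‖ * ‖y i‖ ≤ C * M :=
      mul_le_mul (hc i) h1 (norm_nonneg _) ((norm_nonneg _).trans (hc i))
    simp only [ha]
    rw [norm_mul, Real.norm_of_nonneg (hr i).le]
    refine mul_le_mul_of_nonneg_left ?_ (hr i).le
    refine (norm_sub_le _ _).trans ?_
    have h4 : ‖y i‖ ^ 2 ≤ M ^ 2 := by gcongr
    rw [Real.norm_of_nonneg (by positivity), Real.norm_eq_abs]
    linarith
  have hb_le : ∀ p : ι × ι, ∀ y ∈ K, ‖b y p‖ ≤ r p.1 * r p.2 * (M + M) := by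
    intro p y hy
    have h1 := (hKmem y).1 hy p.1
    have h2 := (hKmem y).1 hy p.2
    have h0 : 0 ≤ r p.1 * r p.2 := mul_nonneg (hr _).le (hr _).le
    simp only [hb]
    rw [norm_mul, Real.norm_of_nonneg h0, norm_norm]
    refine mul_le_mul_of_nonneg_left ?_ h0
    exact (norm_sub_le _ _).trans (by linarith)
  have ha_s : ∀ y ∈ K, Summable (a y) := fun y hy =>
    Summable.of_norm_bounded (hs.mul_right _) (fun i => ha_le i y hy)
  have hb_s : ∀ y ∈ K, Summable (b y) := fun y hy =>
    Summable.of_norm_bounded (hrr.mul_right _) (fun i => hb_le i y hy)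
  have hcont : ContinuousOn (fun y => ∑' i, a y i + (∑' p, b y p) / 2) K := by
    refine ContinuousOn.add ?_ (ContinuousOn.div_const ?_ _)
    · refine continuousOn_tsum (fun i => ?_) (hs.mul_right _) ha_le
      simp only [ha]
      fun_prop
    · refine continuousOn_tsum (fun i => ?_) (hrr.mul_right _) hb_le
      simp only [hb]
      fun_prop
  obtain ⟨y, hyK, hymin⟩ := hKc.exists_isMinOn ⟨0, (hKmem 0).2 (by simpa using fun _ => hM)⟩ hcont
  have hy := (hKmem y).1 hyK
  refine ⟨y, hy, fun i u hu => ?_⟩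
  have hy' : Function.update y i u ∈ K := by
    rw [hKmem]
    intro j
    by_cases hj : j = i
    · subst hj; simpa using hu
    · simpa [hj] using hy j
  set y' := Function.update y i u with hy'def
  have hyi : y' i = u := by simp [hy'def]
  have hyj : ∀ j, j ≠ i → y' j = y j := by intro j hj; simp [hy'def, hj]
  have hmin := hymin hy'
  simp only [Set.mem_ofPred_eq] at hmin
  have hA : HasSum (fun j => a y' j - a y j)
      (r i * (‖u‖ ^ 2 / 2 - inner ℝ (c i) u) - r i * (‖y i‖ ^ 2 / 2 - inner ℝ (c i) (y i))) := by
    have := hasSum_single (f := fun j => a y' j - a y j) i (fun j hj => by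
      simp only [ha, hyj j hj, sub_self])
    simpa only [ha, hyi] using this
  have hA' := hA.unique ((ha_s y' hy').hasSum.sub (ha_s y hyK).hasSum)
  set e : ι → ℝ := fun k => r i * (r k * ‖u - y k‖ - r k * ‖y i - y k‖)
    - (if k = i then r i * (r i * ‖u - y i‖) else 0) with he
  set Eu := r i * (∑' j, r j * ‖u - y j‖ - ∑' j, r j * ‖y i - y j‖) - r i * (r i * ‖u - y i‖)
    with hEu
  have hE : HasSum e Eu :=
    (((summable_dist hr hs hy u).hasSum.sub (summable_dist hr hs hy (y i)).hasSum).mul_left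
      (r i)).sub (hasSum_ite_eq i _)
  have hE1 : HasSum (fun p : ι × ι => if p.1 = i then e p.2 else 0) Eu := by
    have hinj : Function.Injective (fun k : ι => (i, k)) := fun k k' h => (Prod.mk.inj h).2
    rw [← hinj.hasSum_iff]
    · simpa [Function.comp_def] using hE
    · rintro ⟨j, k⟩ hjk
      have : j ≠ i := by rintro rfl; exact hjk ⟨k, rfl⟩
      simp [this]
  have hE2 : HasSum (fun p : ι × ι => if p.2 = i then e p.1 else 0) Eu := by
    have hinj : Function.Injective (fun k : ι => (k, i)) := fun k k' h => (Prod.mk.inj h).1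
    rw [← hinj.hasSum_iff]
    · simpa [Function.comp_def] using hE
    · rintro ⟨j, k⟩ hjk
      have : k ≠ i := by rintro rfl; exact hjk ⟨j, rfl⟩
      simp [this]
  have hpt : (fun p : ι × ι => (if p.1 = i then e p.2 else 0) + (if p.2 = i then e p.1 else 0)) =
      fun p => b y' p - b y p := by
    funext ⟨j, k⟩
    simp only [hb, he]
    by_cases hj : j = i <;> by_cases hk : k = i
    · subst hj; subst hk; simp
    · subst hj; simp [hk, hyi, hyj k hk]; ring
    · subst hk; simp [hj, hyi, hyj j hj, norm_sub_rev (y j)]; ring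
    · simp [hj, hk, hyj j hj, hyj k hk]
  have hB0 := hE1.add hE2
  rw [hpt] at hB0
  have hB' := hB0.unique ((hb_s y' hy').hasSum.sub (hb_s y hyK).hasSum)
  have hfin : 0 ≤ r i * ((‖u‖ ^ 2 / 2 - inner ℝ (c i) u) - (‖y i‖ ^ 2 / 2 - inner ℝ (c i) (y i))
      + (∑' j, r j * ‖u - y j‖ - ∑' j, r j * ‖y i - y j‖) - r i * ‖u - y i‖) := by
    rw [hEu] at hB'
    linarith
  have := nonneg_of_mul_nonneg_right hfin (hr i)
  linarith

lemma pushMap_avoids {ι : Type*} {r : ι → ℝ}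
    (hr : ∀ i, 0 < r i) (hs : Summable r) {c y : ι → ℂ} {M : ℝ} (hy : ∀ i, ‖y i‖ ≤ M)
    (h : ∀ i, ∀ u : ℂ, ‖u‖ ≤ M →
      ‖y i‖ ^ 2 / 2 - inner ℝ (c i) (y i) + ∑' j, r j * ‖y i - y j‖ ≤
      ‖u‖ ^ 2 / 2 - inner ℝ (c i) u + ∑' j, r j * ‖u - y j‖ - r i * ‖u - y i‖)
    {w : ℂ} (hw : ‖w‖ ≤ M) (i : ι) (hwi : w ≠ y i) : r i < ‖pushMap r y w - c i‖ := by
  have h1 := pushMap_convex hr hs hy w (y i)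
  have h2 := h i w hw
  have h3 : inner ℝ (pushMap r y w - c i) (w - y i) ≤ ‖pushMap r y w - c i‖ * ‖w - y i‖ :=
    real_inner_le_norm _ _
  have h4 : inner ℝ (pushMap r y w - c i) (w - y i) =
      - inner ℝ (pushMap r y w) (y i - w) - inner ℝ (c i) w + inner ℝ (c i) (y i) := by
    rw [inner_sub_left, inner_sub_right (c i), ← inner_neg_right, neg_sub]
    ring
  rw [norm_sub_rev (y i) w] at h1
  have h5 : 0 < ‖w - y i‖ := norm_pos_iff.mpr (sub_ne_zero.mpr hwi)
  by_contra hcon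
  push Not at hcon
  nlinarith

/-! ### The carpet -/

lemma openSquare_isOpen (a : ℂ) (l : ℝ) : IsOpen (openSquare a l) :=
  (isOpen_Ioo.preimage Complex.continuous_re).inter (isOpen_Ioo.preimage Complex.continuous_im)

lemma unitSquare_isClosed : IsClosed unitSquare :=
  (isClosed_Icc.preimage Complex.continuous_re).inter (isClosed_Icc.preimage Complex.continuous_im)

lemma carpet_norm_le {z : ℂ} (hz : z ∈ sierpinskiCarpet) : ‖z‖ ≤ 2 := by
  obtain ⟨⟨h1, h2⟩, -⟩ := hz
  have := Complex.norm_le_abs_re_add_abs_im z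
  rw [abs_of_nonneg h1.1, abs_of_nonneg h2.1] at this
  linarith [h1.2, h2.2]

lemma carpet_isClosed : IsClosed sierpinskiCarpet := by
  unfold sierpinskiCarpet
  refine unitSquare_isClosed.sdiff ?_
  exact isOpen_iUnion fun k => isOpen_iUnion fun m => isOpen_iUnion fun n => openSquare_isOpen _ _

lemma carpet_isCompact : IsCompact sierpinskiCarpet :=
  Metric.isCompact_of_isClosed_isBounded carpet_isClosed
    ((Metric.isBounded_closedBall (x := (0 : ℂ)) (r := 2)).subset fun z hz => by
      simpa using carpet_norm_le hz)

lemma carpet_interior : interior sierpinskiCarpet = ∅ := by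
  rw [Set.eq_empty_iff_forall_notMem]
  intro z hz
  rw [mem_interior_iff_mem_nhds, Metric.mem_nhds_iff] at hz
  obtain ⟨ε, hε, hball⟩ := hz
  have hmem : ∀ p : ℂ, ‖p - z‖ < ε → p ∈ sierpinskiCarpet := fun p hp =>
    hball (by simpa [dist_eq_norm] using hp)
  obtain ⟨⟨h1, h2⟩, -⟩ := hmem z (by simpa using hε)
  -- the coordinates are strictly less than one
  have hlt : z.re < 1 ∧ z.im < 1 := by
    obtain ⟨⟨h3, h4⟩, -⟩ := hmem ⟨z.re + ε / 4, z.im + ε / 4⟩ (by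
      refine (Complex.norm_le_abs_re_add_abs_im _).trans_lt ?_
      simp only [Complex.sub_re, Complex.sub_im, add_sub_cancel_left]
      rw [abs_of_pos (by positivity)]
      linarith)
    have h5 : z.re + ε / 4 ≤ 1 := h3.2
    have h6 : z.im + ε / 4 ≤ 1 := h4.2
    constructor <;> linarith
  obtain ⟨k, hk⟩ := exists_pow_lt_of_lt_one (show 0 < ε / 4 by positivity)
    (show (1 / 3 : ℝ) < 1 by norm_num)
  have h3k : (0 : ℝ) < 3 ^ k := by positivity
  have key : ∀ x : ℝ, 0 ≤ x → x < 1 → ∃ m : Fin (3 ^ k),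
      |((m : ℕ) + 1 / 2) / 3 ^ k - x| ≤ (1 / 3) ^ k := by
    intro x h0 hx1
    have hf : ⌊x * 3 ^ k⌋₊ < 3 ^ k := by
      rw [Nat.floor_lt (by positivity)]
      push_cast
      nlinarith
    refine ⟨⟨⌊x * 3 ^ k⌋₊, hf⟩, ?_⟩
    have ha := Nat.floor_le (show 0 ≤ x * 3 ^ k by positivity)
    have hb := Nat.lt_floor_add_one (x * 3 ^ k)
    simp only
    rw [one_div_pow, abs_le]
    constructor
    · rw [neg_le_sub_iff_le_add, ← sub_le_iff_le_add', ← sub_nonneg]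
      have : ((⌊x * 3 ^ k⌋₊ : ℝ) + 1 / 2) / 3 ^ k - (x - 1 / 3 ^ k) =
        ((⌊x * 3 ^ k⌋₊ : ℝ) + 1 / 2 + 1 - x * 3 ^ k) / 3 ^ k := by field_simp; ring
      have h9 : 0 ≤ ((⌊x * 3 ^ k⌋₊ : ℝ) + 1 / 2) / 3 ^ k - (x - 1 / 3 ^ k) := by
        rw [this]; apply div_nonneg <;> linarith
      linarith
    · have : ((⌊x * 3 ^ k⌋₊ : ℝ) + 1 / 2) / 3 ^ k - x =
        ((⌊x * 3 ^ k⌋₊ : ℝ) + 1 / 2 - x * 3 ^ k) / 3 ^ k := by field_simp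
      rw [this]
      gcongr
      linarith
  obtain ⟨m, hm⟩ := key z.re h1.1 hlt.1
  obtain ⟨n, hn⟩ := key z.im h2.1 hlt.2
  have hp := hmem ⟨((m : ℕ) + 1 / 2) / 3 ^ k, ((n : ℕ) + 1 / 2) / 3 ^ k⟩ (by
    refine (Complex.norm_le_abs_re_add_abs_im _).trans_lt ?_
    simp only [Complex.sub_re, Complex.sub_im]
    linarith)
  refine hp.2 ?_
  simp only [Set.mem_iUnion]
  refine ⟨k, m, n, ?_⟩
  have hsq : ∀ q : ℕ, ((3 : ℝ) ^ (k + 1))⁻¹ * (3 * q + 1) < (q + 1 / 2) / 3 ^ k ∧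
      (q + 1 / 2) / 3 ^ k < ((3 : ℝ) ^ (k + 1))⁻¹ * (3 * q + 1) + ((3 : ℝ) ^ (k + 1))⁻¹ := by
    intro q
    rw [pow_succ, ← sub_pos, ← sub_pos (b := (q + 1 / 2 : ℝ) / 3 ^ k)]
    constructor
    · have : ((q + 1 / 2) / 3 ^ k - ((3 : ℝ) ^ k * 3)⁻¹ * (3 * q + 1)) = (1 / 6) / 3 ^ k := by
        field_simp; ring
      rw [this]; positivity
    · have : (((3 : ℝ) ^ k * 3)⁻¹ * (3 * q + 1) + ((3 : ℝ) ^ k * 3)⁻¹ - (q + 1 / 2) / 3 ^ k)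
        = (1 / 6) / 3 ^ k := by
        field_simp; ring
      rw [this]; positivity
  unfold openSquare
  simp only [Set.mem_ofPred_eq, Set.mem_Ioo, Complex.re_ofReal_mul, Complex.im_ofReal_mul]
  have hre : (((3 * (m : ℕ) + 1 : ℕ) : ℂ) + ((3 * (n : ℕ) + 1 : ℕ) : ℂ) * Complex.I).re
      = 3 * (m : ℕ) + 1 := by
    simp only [Complex.add_re, Complex.mul_re, Complex.natCast_re, Complex.natCast_im,
      Complex.I_re, Complex.I_im]
    push_cast; ring
  have him : (((3 * (m : ℕ) + 1 : ℕ) : ℂ) + ((3 * (n : ℕ) + 1 : ℕ) : ℂ) * Complex.I).im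
      = 3 * (n : ℕ) + 1 := by
    simp only [Complex.add_im, Complex.mul_im, Complex.natCast_re, Complex.natCast_im,
      Complex.I_re, Complex.I_im]
    push_cast; ring
  rw [hre, him]
  exact ⟨hsq m, hsq n⟩

/-- A small translate-dilate of the carpet avoids a countable family of points. -/
lemma exists_carpet_avoiding {ι : Type*} [Countable ι] (y : ι → ℂ) {l : ℝ} (hl : 0 < l) :
    ∃ t : ℂ, ‖t‖ < l ∧ ∀ z ∈ sierpinskiCarpet, ∀ i, t + l * z ≠ y i := by
  have hl0 : (l : ℂ) ≠ 0 := by exact_mod_cast hl.ne'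
  let g : ι → ℂ ≃ₜ ℂ := fun i =>
    ((Homeomorph.subLeft (y i)).trans (Homeomorph.mulLeft₀ ((l : ℂ)⁻¹) (inv_ne_zero hl0)))
  have hg : ∀ i t, g i t = (l : ℂ)⁻¹ * (y i - t) := fun i t => rfl
  have hd : Dense (⋂ i, (g i ⁻¹' sierpinskiCarpet)ᶜ) := by
    refine dense_iInter_of_isOpen (fun i => ?_) (fun i => ?_)
    · exact (carpet_isClosed.preimage (g i).continuous).isOpen_compl
    · rw [← interior_eq_empty_iff_dense_compl, ← (g i).preimage_interior, carpet_interior,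
        Set.preimage_empty]
  obtain ⟨t, ht1, ht2⟩ := hd.exists_mem_open Metric.isOpen_ball ⟨0, Metric.mem_ball_self hl⟩
  refine ⟨t, by simpa using ht2, fun z hz i h => ?_⟩
  have := Set.mem_iInter.1 ht1 i
  apply this
  rw [Set.mem_preimage, hg, ← h]
  have : (l : ℂ)⁻¹ * (t + l * z - t) = z := by field_simp; ring
  rwa [this]

/-- The radii data extracted from `δ > 0`. -/
lemma discRadius_ball (z : ℂ) {r : ℝ} (hr : 0 < r) : discRadius (Metric.ball z r) = r := by
  unfold discRadius
  rw [Metric.diam_ball_eq z hr.le]; ring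

lemma discRadius_closedBall (z : ℂ) {r : ℝ} (hr : 0 < r) :
    discRadius (Metric.closedBall z r) = r := by
  unfold discRadius
  rw [Metric.diam_closedBall_eq z hr.le]; ring

theorem swiss_cheese_set_contains_sierpinski_carpet (D : SwissCheese)
    (hδ : 0 < D.delta) (hint : interior D.X = ∅) :
    ∃ S : Set ℂ, S ⊆ D.X ∧ Nonempty (S ≃ₜ sierpinskiCarpet) := by
  classical
  obtain ⟨z₀, R, hR, hΔ⟩ := D.hΔ
  have hex : ∀ i : D.𝒟, ∃ z : ℂ, ∃ r : ℝ, 0 < r ∧ (i : Set ℂ) = Metric.ball z r :=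
    fun i => D.h𝒟 i i.2
  choose c r hr hball using hex
  have : Countable D.𝒟 := D.hcount.to_subtype
  -- summability of the radii
  have hrad : radSum D.𝒟 = ∑' i, ENNReal.ofReal (r i) := by
    unfold radSum
    refine tsum_congr fun i => ?_
    rw [hball i, discRadius_ball _ (hr i)]
  have hlt : radSum D.𝒟 < ENNReal.ofReal R := by
    have h := hδ
    unfold SwissCheese.delta at h
    rw [hΔ, discRadius_closedBall _ hR] at h
    by_contra hcon
    push Not at hcon
    have h2 : (R : EReal) ≤ ((radSum D.𝒟 : ENNReal) : EReal) := by
      have h3 : ((ENNReal.ofReal R : ENNReal) : EReal) ≤ ((radSum D.𝒟 : ENNReal) : EReal) :=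
        EReal.coe_ennreal_le_coe_ennreal_iff.mpr hcon
      rwa [EReal.coe_ennreal_ofReal, max_eq_left hR.le] at h3
    have h4 := EReal.sub_pos.mp h
    exact absurd h4 (not_lt.mpr h2)
  have hs : Summable r := by
    have hne : ∑' i, ENNReal.ofReal (r i) ≠ ⊤ := by
      rw [← hrad]; exact (hlt.trans ENNReal.ofReal_lt_top).ne
    have := ENNReal.summable_toReal hne
    simpa [ENNReal.toReal_ofReal (hr _).le] using this
  have hsum : ∑' i, r i < R := by
    rw [hrad, ← ENNReal.ofReal_tsum_of_nonneg (fun i => (hr i).le) hs] at hlt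
    exact (ENNReal.ofReal_lt_ofReal_iff hR).mp hlt
  set δ := R - ∑' i, r i with hδdef
  have hδ0 : 0 < δ := by linarith
  have hrR : ∀ i, r i < R := fun i => (hs.le_tsum i (fun j _ => (hr j).le)).trans_lt hsum
  let c' : D.𝒟 → ℂ := fun i => if ‖c i - z₀‖ ≤ 2 * R then c i - z₀ else 0
  have hc' : ∀ i, ‖c' i‖ ≤ 2 * R := by
    intro i
    simp only [c']
    split_ifs with h
    · exact h
    · simp; exact hR.le
  obtain ⟨y, hy, hmin⟩ := exists_centres hr hs c' hc' hδ0.le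
  obtain ⟨t, ht, hav⟩ := exists_carpet_avoiding y (show 0 < δ / 4 by positivity)
  have hnorm : ∀ z ∈ sierpinskiCarpet, ‖t + ((δ / 4 : ℝ) : ℂ) * z‖ ≤ δ := by
    intro z hz
    refine (norm_add_le _ _).trans ?_
    rw [norm_mul, Complex.norm_real, Real.norm_of_nonneg (by positivity)]
    have := carpet_norm_le hz
    nlinarith
  let f : sierpinskiCarpet → ℂ := fun z => z₀ + pushMap r y (t + ((δ / 4 : ℝ) : ℂ) * (z : ℂ))
  have hfc : Continuous f := by
    refine continuous_const.add ?_
    refine (pushMap_continuousOn hr hs y (s := {w | ∀ i, w ≠ y i}) (fun w hw => hw)).comp_continuous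
      (by fun_prop) (fun z => hav z z.2)
  have hfi : Function.Injective f := by
    intro z w h
    have h1 := pushMap_injective hr hs hy (add_left_cancel h)
    have h2 := mul_left_cancel₀ (by exact_mod_cast (by positivity : δ / 4 ≠ 0)) (add_left_cancel h1)
    exact Subtype.ext h2
  have : CompactSpace sierpinskiCarpet := isCompact_iff_compactSpace.mp carpet_isCompact
  have hemb := (hfc.isClosedEmbedding hfi).isEmbedding
  refine ⟨Set.range f, ?_, ⟨hemb.toHomeomorph.symm⟩⟩
  rintro _ ⟨z, rfl⟩
  have hle : ‖pushMap r y (t + ((δ / 4 : ℝ) : ℂ) * (z : ℂ))‖ ≤ R := by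
    have h1 := norm_pushMap_le hr hs y (t + ((δ / 4 : ℝ) : ℂ) * (z : ℂ))
    have h2 := hnorm z z.2
    linarith
  refine ⟨?_, ?_⟩
  · rw [hΔ, Metric.mem_closedBall, dist_eq_norm]
    simpa [f] using hle
  · rintro ⟨B, hB, hfB⟩
    have hb := hball ⟨B, hB⟩
    simp only at hb
    rw [hb, Metric.mem_ball, dist_eq_norm] at hfB
    have h1 := pushMap_avoids hr hs hy hmin (hnorm z z.2) ⟨B, hB⟩ (hav z z.2 _)
    have h2 : f z - c ⟨B, hB⟩ = pushMap r y (t + ((δ / 4 : ℝ) : ℂ) * (z : ℂ)) - (c ⟨B, hB⟩ - z₀) := by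
      simp only [f]; ring
    rw [h2] at hfB
    by_cases hcb : ‖c ⟨B, hB⟩ - z₀‖ ≤ 2 * R
    · simp only [c', hcb, if_true] at h1
      linarith
    · have h3 := norm_sub_norm_le (c ⟨B, hB⟩ - z₀) (pushMap r y (t + ((δ / 4 : ℝ) : ℂ) * (z : ℂ)))
      rw [norm_sub_rev (c ⟨B, hB⟩ - z₀) (pushMap _ _ _)] at h3
      have := hrR ⟨B, hB⟩
      push Not at hcb
      linarith
end

section
/- Let X be a semiclassical Swiss cheese set, with semiclassical Swiss cheese D = (Δ, 𝒟). Let γ_Δ be the positively oriented boundary circle of Δ and, for each D' ∈ 𝒟, γ_{D'} the negatively oriented boundary circle of D'. Then μ := μ_{γ_Δ} + Σ_{D'∈𝒟} μ_{γ_{D'}} defines a regular complex Borel measure on X of finite total variation (using Σ r(D') < ∞), whose support equals the boundary ∂X. -/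
open MeasureTheory

/-- The complex measure `μ_γ` associated to the circle `t ↦ z + r·exp(ε·i·t)`, `t ∈ [0,2π]`
(so `ε = 1` gives positive orientation, `ε = -1` negative orientation), characterised by
`∫ f dμ_γ = ∫_γ f dz`.  It is constructed as the image under the parametrisation of the
vector measure with density `γ'(t)` with respect to Lebesgue measure on `[0,2π]`. -/
noncomputable def circleVM (z : ℂ) (r : ℝ) (ε : ℝ) : VectorMeasure ℂ ℂ :=
  VectorMeasure.map
    ((volume.restrict (Set.Ioc (0 : ℝ) (2 * Real.pi))).withDensityᵥ
      (fun t : ℝ => (ε : ℂ) * Complex.I * (r : ℂ) * Complex.exp ((ε : ℂ) * Complex.I * (t : ℂ))))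
    (fun t : ℝ => z + (r : ℂ) * Complex.exp ((ε : ℂ) * Complex.I * (t : ℂ)))

/-- The support of a complex (vector) measure: the points all of whose neighbourhoods contain
a measurable set of non-zero measure. -/
def vmSupport (μ : VectorMeasure ℂ ℂ) : Set ℂ :=
  {z : ℂ | ∀ U : Set ℂ, IsOpen U → z ∈ U → ∃ A ⊆ U, MeasurableSet A ∧ μ A ≠ 0}

namespace SwissAux

/-- parametrisation -/
noncomputable def par (z : ℂ) (r ε : ℝ) (t : ℝ) : ℂ :=
  z + (r : ℂ) * Complex.exp ((ε : ℂ) * Complex.I * (t : ℂ))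

/-- derivative of the parametrisation -/
noncomputable def dpar (r ε : ℝ) (t : ℝ) : ℂ :=
  (ε : ℂ) * Complex.I * (r : ℂ) * Complex.exp ((ε : ℂ) * Complex.I * (t : ℂ))

lemma par_cont (z : ℂ) (r ε : ℝ) : Continuous (par z r ε) := by
  unfold par; fun_prop

lemma dpar_cont (r ε : ℝ) : Continuous (dpar r ε) := by
  unfold dpar; fun_prop

lemma norm_exp_aux (ε t : ℝ) : ‖Complex.exp ((ε : ℂ) * Complex.I * (t : ℂ))‖ = 1 := by
  have : (ε : ℂ) * Complex.I * (t : ℂ) = ((ε * t : ℝ) : ℂ) * Complex.I := by push_cast; ring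
  rw [this, Complex.norm_exp_ofReal_mul_I]

lemma par_mem (z : ℂ) (r ε : ℝ) (hr : 0 < r) (t : ℝ) : par z r ε t ∈ Metric.sphere z r := by
  simp [par, norm_exp_aux, abs_of_pos hr]

lemma dpar_integrable (r ε : ℝ) :
    Integrable (dpar r ε) (volume.restrict (Set.Ioc (0 : ℝ) (2 * Real.pi))) :=
  ((dpar_cont r ε).integrableOn_Icc (a := 0) (b := 2 * Real.pi)).mono_set Set.Ioc_subset_Icc_self

lemma circleVM_apply (z : ℂ) (r ε : ℝ) {A : Set ℂ} (hA : MeasurableSet A) :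
    circleVM z r ε A = ∫ t in (par z r ε) ⁻¹' A,
      dpar r ε t ∂(volume.restrict (Set.Ioc (0 : ℝ) (2 * Real.pi))) := by
  have h := (par_cont z r ε).measurable
  change VectorMeasure.map ((volume.restrict (Set.Ioc (0 : ℝ) (2 * Real.pi))).withDensityᵥ
    (dpar r ε)) (par z r ε) A = _
  rw [VectorMeasure.map_apply _ h hA, withDensityᵥ_apply (dpar_integrable r ε) (h hA)]

lemma circleVM_eq_zero (z : ℂ) (r ε : ℝ) (hr : 0 < r) {A : Set ℂ} (hA : MeasurableSet A)
    (h : Disjoint A (Metric.sphere z r)) : circleVM z r ε A = 0 := by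
  have : (par z r ε) ⁻¹' A = ∅ := by
    ext t
    simp only [Set.mem_preimage, Set.mem_empty_iff_false, iff_false]
    exact fun ht => Set.disjoint_left.1 h ht (par_mem z r ε hr t)
  rw [circleVM_apply z r ε hA, this]; simp

lemma circleVM_bound (z : ℂ) (r ε : ℝ) (hr : 0 < r) (hε : |ε| = 1) {A : Set ℂ}
    (hA : MeasurableSet A) :
    ‖circleVM z r ε A‖ ≤ r * ((volume.restrict (Set.Ioc (0 : ℝ) (2 * Real.pi))).map
      (par z r ε)).real A := by
  rw [circleVM_apply z r ε hA, map_measureReal_apply (par_cont z r ε).measurable hA]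
  refine norm_setIntegral_le_of_norm_le_const (measure_lt_top _ _) ?_
  intro t _
  simp [dpar, norm_exp_aux, abs_of_pos hr, hε]

lemma exists_sum {ι : Type} (v : ι → VectorMeasure ℂ ℂ) (m : ι → Measure ℂ)
    [∀ i, IsFiniteMeasure (m i)] (ρ : ι → ℝ) (C : ℝ) (hρ : ∀ i, 0 < ρ i) (hs : Summable ρ)
    (hC : ∀ i, (m i).real Set.univ ≤ C)
    (hb : ∀ i A, MeasurableSet A → ‖v i A‖ ≤ ρ i * (m i).real A) :
    ∃ μ : VectorMeasure ℂ ℂ, (∀ A, MeasurableSet A → Summable (fun i => v i A)) ∧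
      ∀ A, MeasurableSet A → μ A = ∑' i, v i A := by
  have hC' : ∀ i A, (m i).real A ≤ C := fun i A =>
    (measureReal_mono (Set.subset_univ A)).trans (hC i)
  have hsum : ∀ A, MeasurableSet A → Summable (fun i => v i A) := by
    intro A hA
    refine Summable.of_norm_bounded (hs.mul_right C) ?_
    intro i
    exact (hb i A hA).trans (mul_le_mul_of_nonneg_left (hC' i A) (hρ i).le)
  refine ⟨⟨fun A => ∑' i, v i A, by simp, ?_, ?_⟩, hsum, fun A hA => rfl⟩
  · intro A hA
    simp [VectorMeasure.not_measurable _ hA]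
  · intro f hf hd
    have key : Summable (fun p : ι × ℕ => v p.1 (f p.2)) := by
      have hm : ∀ i, HasSum (fun n => (m i).real (f n)) ((m i).real (⋃ n, f n)) := by
        intro i
        have h1 := measure_iUnion (μ := m i) hd hf
        have h2 : ∑' n, (m i) (f n) ≠ ⊤ := by rw [← h1]; exact measure_ne_top _ _
        have := ENNReal.hasSum_toReal h2
        rw [← ENNReal.tsum_toReal_eq (fun n => measure_ne_top _ _), ← h1] at this
        exact this
      have : Summable (fun p : ι × ℕ => ρ p.1 * (m p.1).real (f p.2)) := by
        rw [summable_prod_of_nonneg]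
        · refine ⟨fun i => ((hm i).summable.mul_left (ρ i)), ?_⟩
          refine Summable.of_nonneg_of_le (fun i => ?_) (fun i => ?_) (hs.mul_right C)
          · exact tsum_nonneg fun n => mul_nonneg (hρ i).le measureReal_nonneg
          · simp only
            rw [((hm i).mul_left (ρ i)).tsum_eq]
            exact mul_le_mul_of_nonneg_left (hC' i _) (hρ i).le
        · intro p
          exact mul_nonneg (hρ p.1).le measureReal_nonneg
      exact Summable.of_norm_bounded this (fun p => hb p.1 _ (hf p.2))
    have hf1 : ∀ i, HasSum (fun n => v i (f n)) (v i (⋃ n, f n)) := fun i =>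
      (v i).m_iUnion hf hd
    have h1 := key.hasSum.prod_fiberwise hf1
    have key2 := (Equiv.prodComm ℕ ι).hasSum_iff.2 key.hasSum
    have h2 := key2.prod_fiberwise (fun n => (hsum (f n) (hf n)).hasSum)
    rw [← h1.tsum_eq] at h2
    exact h2

lemma sphere_inter_countable (a b : ℂ) (r s : ℝ) (h : a ≠ b ∨ r ≠ s) :
    (Metric.sphere a r ∩ Metric.sphere b s).Countable := by
  by_cases hab : a = b
  · subst hab
    have : Metric.sphere a r ∩ Metric.sphere a s = ∅ := by
      ext w
      simp only [Set.mem_inter_iff, Metric.mem_sphere, Set.mem_empty_iff_false, iff_false]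
      rintro ⟨h1, h2⟩
      rcases h with h | h
      · exact h rfl
      · exact h (h1.symm.trans h2)
    rw [this]; exact Set.countable_empty
  · by_cases hs : (Metric.sphere a r ∩ Metric.sphere b s).Subsingleton
    · exact hs.countable
    · rw [Set.not_subsingleton_iff] at hs
      obtain ⟨p, hp, q, hq, hpq⟩ := hs
      refine Set.Countable.mono (s₂ := {p, q}) ?_ (by simp)
      intro w hw
      have : Fact (Module.finrank ℝ ℂ = 2) := ⟨Complex.finrank_real_complex⟩
      exact EuclideanGeometry.eq_of_dist_eq_of_dist_eq_of_finrank_eq_two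
        Complex.finrank_real_complex hab hpq hp.1 hq.1 hw.1 hp.2 hq.2 hw.2

lemma par_surj (c : ℂ) (r ε : ℝ) (hr : 0 < r) (hε : ε = 1 ∨ ε = -1) (z : ℂ)
    (hz : z ∈ Metric.sphere c r) : ∃ t ∈ Set.Ioc (0 : ℝ) (2 * Real.pi), par c r ε t = z := by
  have hp := Real.two_pi_pos
  set a := (z - c).arg
  refine ⟨toIocMod hp 0 (ε * a), by simpa using toIocMod_mem_Ioc hp 0 (ε * a), ?_⟩
  have h1 : toIocMod hp 0 (ε * a) = ε * a - toIocDiv hp 0 (ε * a) * (2 * Real.pi) := by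
    have := toIocMod_add_toIocDiv_zsmul hp 0 (ε * a)
    rw [zsmul_eq_mul] at this
    linarith
  have hn : ‖z - c‖ = r := by simpa [dist_eq_norm] using hz
  have h2 : (r : ℂ) * Complex.exp (a * Complex.I) = z - c := by
    rw [← hn]; exact Complex.norm_mul_exp_arg_mul_I _
  unfold par
  rw [h1]
  generalize toIocDiv hp 0 (ε * a) = n
  have h3 : Complex.exp ((ε : ℂ) * Complex.I * ((ε * a - n * (2 * Real.pi) : ℝ) : ℂ))
      = Complex.exp (a * Complex.I) := by
    rw [Complex.exp_eq_exp_iff_exists_int]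
    rcases hε with rfl | rfl
    · exact ⟨-n, by push_cast; ring⟩
    · exact ⟨n, by push_cast; ring⟩
  rw [h3, h2]; ring

lemma par_preimage_countable (c : ℂ) (r ε : ℝ) (hr : 0 < r) (hε : ε = 1 ∨ ε = -1) (N : Set ℂ)
    (hN : N.Countable) : ((par c r ε) ⁻¹' N).Countable := by
  rw [← Set.biUnion_preimage_singleton]
  refine hN.biUnion fun w _ => ?_
  by_cases h : ((par c r ε) ⁻¹' {w}).Nonempty
  · obtain ⟨s, hs⟩ := h
    refine Set.Countable.mono (s₂ := Set.range fun n : ℤ => s + ε * (n * (2 * Real.pi))) ?_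
      (Set.countable_range _)
    intro t ht
    have hst : par c r ε t = par c r ε s := ht.trans hs.symm
    have hrc : (r : ℂ) ≠ 0 := by exact_mod_cast hr.ne'
    have h1 := mul_left_cancel₀ hrc (add_left_cancel hst)
    rw [Complex.exp_eq_exp_iff_exists_int] at h1
    obtain ⟨n, hn⟩ := h1
    refine ⟨n, ?_⟩
    have h2 : (ε : ℂ) * t = ε * s + n * (2 * Real.pi) := by
      apply mul_right_cancel₀ Complex.I_ne_zero
      linear_combination hn
    have h3 : ε * t = ε * s + n * (2 * Real.pi) := by exact_mod_cast h2
    simp only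
    rcases hε with rfl | rfl <;> linarith
  · rw [Set.not_nonempty_iff_eq_empty.1 h]; exact Set.countable_empty

lemma circle_nonzero (c : ℂ) (r ε : ℝ) (hr : 0 < r) (hε : ε = 1 ∨ ε = -1) (z : ℂ)
    (hz : z ∈ Metric.sphere c r) (U : Set ℂ) (hU : IsOpen U) (hzU : z ∈ U) (N : Set ℂ)
    (hN : N.Countable) :
    ∃ A ⊆ U, A ⊆ Metric.sphere c r \ N ∧ MeasurableSet A ∧ circleVM c r ε A ≠ 0 := by
  have hn : ‖z - c‖ = r := by simpa [dist_eq_norm] using hz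
  -- the half plane in which the integrand has positive component
  let V : Set ℂ := {w | 0 < ((w - c) * (starRingEnd ℂ) (z - c)).re}
  have hV : IsOpen V := isOpen_lt continuous_const (by fun_prop)
  have hzV : z ∈ V := by
    change 0 < ((z - c) * (starRingEnd ℂ) (z - c)).re
    rw [Complex.mul_conj, Complex.ofReal_re, Complex.normSq_eq_norm_sq, hn]
    positivity
  set A : Set ℂ := (U ∩ V) ∩ (Metric.sphere c r \ N) with hAdef
  have hAm : MeasurableSet A := (hU.inter hV).measurableSet.inter
    (Metric.isClosed_sphere.measurableSet.diff hN.measurableSet)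
  refine ⟨A, fun w hw => hw.1.1, fun w hw => hw.2, hAm, ?_⟩
  rw [circleVM_apply c r ε hAm]
  intro h0
  let L' : ℂ →L[ℝ] ℝ := Complex.reCLM.comp
    ((ContinuousLinearMap.mul ℝ ℂ).flip (-(ε : ℂ) * Complex.I * (starRingEnd ℂ) (z - c)))
  have hLL : ∀ t, L' (dpar r ε t) = ((par c r ε t - c) * (starRingEnd ℂ) (z - c)).re := by
    intro t
    change (dpar r ε t * (-(ε : ℂ) * Complex.I * (starRingEnd ℂ) (z - c))).re = _
    congr 1
    have h2 : (ε : ℂ) * ε = 1 := by rcases hε with rfl | rfl <;> simp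
    have h3 := Complex.I_mul_I
    unfold dpar par
    linear_combination (-(r : ℂ) * Complex.exp (ε * Complex.I * t) * (starRingEnd ℂ) (z - c)) *
      (h2 * (Complex.I * Complex.I) + h3)
  have hint := (dpar_integrable r ε).integrableOn (s := (par c r ε) ⁻¹' A)
  have h1 := L'.integral_comp_comm hint
  rw [h0, map_zero] at h1
  have hSm : MeasurableSet ((par c r ε) ⁻¹' A) := (par_cont c r ε).measurable hAm
  have hpos : ∀ t ∈ (par c r ε) ⁻¹' A, 0 < L' (dpar r ε t) := by
    intro t ht
    rw [hLL]
    exact ht.1.2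
  have h2 := (setIntegral_eq_zero_iff_of_nonneg_ae
    ((ae_restrict_iff' hSm).2 (Filter.Eventually.of_forall fun t ht => (hpos t ht).le))
    (L'.integrable_comp hint)).1 h1
  have h3 : (volume.restrict (Set.Ioc (0 : ℝ) (2 * Real.pi))) ((par c r ε) ⁻¹' A) = 0 := by
    have h4 := (ae_restrict_iff' hSm).1 h2
    rw [measure_eq_zero_iff_ae_notMem]
    filter_upwards [h4] with t ht hmem
    exact (hpos t hmem).ne' (ht hmem)
  rw [Measure.restrict_apply hSm] at h3
  -- but the preimage contains a one-sided neighbourhood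
  obtain ⟨t0, ht0, htz⟩ := par_surj c r ε hr hε z hz
  have hnh : (par c r ε) ⁻¹' (U ∩ V) ∈ nhds t0 :=
    ((hU.inter hV).preimage (par_cont c r ε)).mem_nhds (by
      rw [Set.mem_preimage, htz]; exact ⟨hzU, hzV⟩)
  obtain ⟨δ, hδ, hball⟩ := Metric.mem_nhds_iff.1 hnh
  have hsub : Set.Ioo (max 0 (t0 - δ)) t0 ⊆
      ((par c r ε) ⁻¹' A ∩ Set.Ioc (0 : ℝ) (2 * Real.pi)) ∪ (par c r ε) ⁻¹' N := by
    intro t ht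
    have ht1 := max_lt_iff.1 ht.1
    by_cases hN' : par c r ε t ∈ N
    · exact Or.inr hN'
    · refine Or.inl ⟨⟨hball ?_, par_mem c r ε hr t, hN'⟩, ht1.1, ht.2.le.trans ht0.2⟩
      rw [Metric.mem_ball, Real.dist_eq, abs_lt]
      constructor <;> linarith [ht.2, ht1.2]
  have h5 := measure_mono_null hsub (measure_union_null h3
    ((par_preimage_countable c r ε hr hε N hN).measure_zero volume))
  rw [Real.volume_Ioo, ENNReal.ofReal_eq_zero] at h5
  have : max 0 (t0 - δ) < t0 := max_lt ht0.1 (by linarith)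
  linarith

lemma frontier_eq {ι : Type} (z0 : ℂ) (R : ℝ)
    (c : ι → ℂ) (ρ : ι → ℝ) (hR : 0 < R) (hρ : ∀ i, 0 < ρ i)
    (hdisj : ∀ i j, i ≠ j → Disjoint (Metric.ball (c i) (ρ i)) (Metric.ball (c j) (ρ j)))
    (hsub : ∀ i, Metric.ball (c i) (ρ i) ⊆ Metric.closedBall z0 R) :
    frontier (Metric.closedBall z0 R \ ⋃ i, Metric.ball (c i) (ρ i)) =
      closure (Metric.sphere z0 R ∪ ⋃ i, Metric.sphere (c i) (ρ i)) := by
  set X := Metric.closedBall z0 R \ ⋃ i, Metric.ball (c i) (ρ i) with hX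
  have hXc : IsClosed X :=
    Metric.isClosed_closedBall.sdiff (isOpen_iUnion fun i => Metric.isOpen_ball)
  have hsub' : ∀ i, Metric.ball (c i) (ρ i) ⊆ Metric.ball z0 R := by
    intro i
    have := interior_maximal (hsub i) Metric.isOpen_ball
    rwa [interior_closedBall _ hR.ne'] at this
  apply Set.Subset.antisymm
  · intro x hx
    have hxX : x ∈ X := hXc.frontier_subset hx
    by_cases hxs : x ∈ Metric.sphere z0 R
    · exact subset_closure (Or.inl hxs)
    have hxb : x ∈ Metric.ball z0 R :=
      lt_of_le_of_ne hxX.1 hxs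
    obtain ⟨δ0, hδ0, hb0⟩ := Metric.isOpen_iff.1 Metric.isOpen_ball x hxb
    rw [Metric.mem_closure_iff]
    intro e he
    have hxc : x ∈ closure Xᶜ := by
      rw [frontier_eq_closure_inter_closure] at hx; exact hx.2
    obtain ⟨y, hy, hxy⟩ := Metric.mem_closure_iff.1 hxc (min e δ0) (lt_min he hδ0)
    have hyD : y ∈ ⋃ i, Metric.ball (c i) (ρ i) := by
      by_contra hcon
      refine hy ⟨Metric.ball_subset_closedBall (hb0 ?_), hcon⟩
      rw [Metric.mem_ball, dist_comm]; exact hxy.trans_le (min_le_right _ _)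
    obtain ⟨i, hi⟩ := Set.mem_iUnion.1 hyD
    have hxi : x ∉ Metric.ball (c i) (ρ i) := fun h => hxX.2 (Set.mem_iUnion.2 ⟨i, h⟩)
    have hpre : IsPreconnected (Metric.ball x e) := (convex_ball x e).isPreconnected
    have hfr : ∃ w ∈ Metric.ball x e, w ∈ Metric.sphere (c i) (ρ i) := by
      by_contra! hno
      have hcov : ∀ w ∈ Metric.ball x e, w ∉ Metric.ball (c i) (ρ i) →
          w ∈ (Metric.closedBall (c i) (ρ i))ᶜ := by
        intro w hw h1 h2
        exact hno w hw (le_antisymm h2 (not_lt.1 h1))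
      have hxe : x ∈ Metric.ball x e := Metric.mem_ball_self he
      have hye : y ∈ Metric.ball x e := by
        rw [Metric.mem_ball, dist_comm]; exact hxy.trans_le (min_le_left _ _)
      obtain ⟨w, -, hw1, hw2⟩ := hpre (Metric.ball (c i) (ρ i)) (Metric.closedBall (c i) (ρ i))ᶜ
        Metric.isOpen_ball Metric.isClosed_closedBall.isOpen_compl
        (fun w hw => or_iff_not_imp_left.2 (hcov w hw)) ⟨y, hye, hi⟩ ⟨x, hxe, hcov x hxe hxi⟩
      exact hw2 (Metric.ball_subset_closedBall hw1)
    obtain ⟨w, hw1, hw2⟩ := hfr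
    exact ⟨w, Or.inr (Set.mem_iUnion.2 ⟨i, hw2⟩), by rw [dist_comm]; exact hw1⟩
  · refine closure_minimal ?_ isClosed_frontier
    rintro x (hx | hx)
    · have hxX : x ∈ X := by
        refine ⟨Metric.sphere_subset_closedBall hx, ?_⟩
        intro h
        obtain ⟨i, hi⟩ := Set.mem_iUnion.1 h
        have := hsub' i hi
        rw [Metric.mem_ball] at this
        rw [Metric.mem_sphere] at hx
        linarith
      rw [frontier_eq_closure_inter_closure]
      refine ⟨subset_closure hxX, ?_⟩
      have : x ∈ frontier (Metric.closedBall z0 R) := by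
        rwa [frontier_closedBall _ hR.ne']
      rw [frontier_eq_closure_inter_closure] at this
      exact closure_mono (Set.compl_subset_compl.2 Set.sdiff_subset) this.2
    · obtain ⟨i, hi⟩ := Set.mem_iUnion.1 hx
      have hcl : x ∈ closure (Metric.ball (c i) (ρ i)) := by
        rw [closure_ball _ (hρ i).ne']; exact Metric.sphere_subset_closedBall hi
      have hxX : x ∈ X := by
        refine ⟨closure_minimal (hsub i) Metric.isClosed_closedBall hcl, ?_⟩
        intro h
        obtain ⟨j, hj⟩ := Set.mem_iUnion.1 h
        by_cases hij : i = j
        · subst hij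
          rw [Metric.mem_ball] at hj
          rw [Metric.mem_sphere] at hi
          linarith
        · exact Set.disjoint_left.1 ((hdisj i j hij).closure_left Metric.isOpen_ball) hcl hj
      rw [frontier_eq_closure_inter_closure]
      refine ⟨subset_closure hxX, closure_mono ?_ hcl⟩
      intro y hy hyX
      exact hyX.2 (Set.mem_iUnion.2 ⟨i, hy⟩)

lemma vmSupport_closed (μ : VectorMeasure ℂ ℂ) : IsClosed (vmSupport μ) := by
  rw [← isOpen_compl_iff, isOpen_iff_forall_mem_open]
  intro x hx
  simp only [vmSupport, Set.mem_compl_iff, Set.mem_ofPred_eq, not_forall] at hx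
  obtain ⟨U, hU, hxU, h⟩ := hx
  exact ⟨U, fun y hy hy' => h (hy' U hU hy), hU, hxU⟩

end SwissAux

open SwissAux in
theorem semiclassical_boundary_measure {ι : Type} [Countable ι] (z0 : ℂ) (R : ℝ)
    (c : ι → ℂ) (ρ : ι → ℝ) (hR : 0 < R) (hρ : ∀ i, 0 < ρ i)
    (hdisj : ∀ i j, i ≠ j → Disjoint (Metric.ball (c i) (ρ i)) (Metric.ball (c j) (ρ j)))
    (hsub : ∀ i, Metric.ball (c i) (ρ i) ⊆ Metric.closedBall z0 R)
    (hproper : ∀ i, Metric.closedBall (c i) (ρ i) ⊂ Metric.closedBall z0 R)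
    (hsum : Summable ρ) :
    ∃ μ : VectorMeasure ℂ ℂ,
      (∀ A : Set ℂ, MeasurableSet A →
        Summable (fun i => circleVM (c i) (ρ i) (-1) A)) ∧
      (∀ A : Set ℂ, MeasurableSet A →
        μ A = circleVM z0 R 1 A + ∑' i, circleVM (c i) (ρ i) (-1) A) ∧
      vmSupport μ =
        frontier (Metric.closedBall z0 R \ ⋃ i, Metric.ball (c i) (ρ i)) := by
  obtain ⟨ν, hν1, hν2⟩ := exists_sum (fun i => circleVM (c i) (ρ i) (-1))
    (fun i => (volume.restrict (Set.Ioc (0 : ℝ) (2 * Real.pi))).map (par (c i) (ρ i) (-1)))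
    ρ (2 * Real.pi) hρ hsum
    (fun i => by
      rw [map_measureReal_apply (par_cont _ _ _).measurable MeasurableSet.univ]
      simp [Real.pi_pos.le])
    (fun i A hA => circleVM_bound _ _ _ (hρ i) (by simp) hA)
  have hμ : ∀ A : Set ℂ, MeasurableSet A →
      (circleVM z0 R 1 + ν) A = circleVM z0 R 1 A + ∑' i, circleVM (c i) (ρ i) (-1) A := by
    intro A hA
    rw [VectorMeasure.add_apply, hν2 A hA]
  refine ⟨circleVM z0 R 1 + ν, hν1, hμ, ?_⟩
  rw [frontier_eq z0 R c ρ hR hρ hdisj hsub]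
  have hne0 : ∀ i, z0 ≠ c i ∨ R ≠ ρ i := by
    intro i
    by_contra! h
    have := hproper i
    rw [← h.1, ← h.2] at this
    exact this.ne rfl
  have hne : ∀ i j, i ≠ j → (c i ≠ c j ∨ ρ i ≠ ρ j) := by
    intro i j hij
    left
    intro h
    refine Set.disjoint_left.1 (hdisj i j hij) (Metric.mem_ball_self (hρ i)) ?_
    rw [h]; exact Metric.mem_ball_self (hρ j)
  apply Set.Subset.antisymm
  · intro z hz
    by_contra hcon
    obtain ⟨A, hAU, hAm, hA⟩ := hz _ isClosed_closure.isOpen_compl hcon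
    apply hA
    have hA' : ∀ w ∈ A, w ∉ Metric.sphere z0 R ∪ ⋃ i, Metric.sphere (c i) (ρ i) :=
      fun w hw h => hAU hw (subset_closure h)
    rw [hμ A hAm, circleVM_eq_zero z0 R 1 hR hAm
      (Set.disjoint_left.2 fun w hw h => hA' w hw (Or.inl h)), zero_add]
    have : ∀ i, circleVM (c i) (ρ i) (-1) A = 0 := fun i =>
      circleVM_eq_zero _ _ _ (hρ i) hAm
        (Set.disjoint_left.2 fun w hw h => hA' w hw (Or.inr (Set.mem_iUnion.2 ⟨i, h⟩)))
    simp [this]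
  · refine closure_minimal ?_ (vmSupport_closed _)
    rintro z (hz | hz) U hU hzU
    · obtain ⟨A, hAU, hAs, hAm, hA⟩ := circle_nonzero z0 R 1 hR (Or.inl rfl) z hz U hU hzU
        (⋃ i, Metric.sphere z0 R ∩ Metric.sphere (c i) (ρ i))
        (Set.countable_iUnion fun i => sphere_inter_countable _ _ _ _ (hne0 i))
      refine ⟨A, hAU, hAm, ?_⟩
      have : ∀ i, circleVM (c i) (ρ i) (-1) A = 0 := fun i =>
        circleVM_eq_zero _ _ _ (hρ i) hAm
          (Set.disjoint_left.2 fun w hw h =>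
            (hAs hw).2 (Set.mem_iUnion.2 ⟨i, (hAs hw).1, h⟩))
      rw [hμ A hAm]
      simpa [this] using hA
    · obtain ⟨i, hi⟩ := Set.mem_iUnion.1 hz
      obtain ⟨A, hAU, hAs, hAm, hA⟩ := circle_nonzero (c i) (ρ i) (-1) (hρ i) (Or.inr rfl) z hi
        U hU hzU
        ((Metric.sphere z0 R ∩ Metric.sphere (c i) (ρ i)) ∪
          ⋃ j : {j // i ≠ j}, Metric.sphere (c i) (ρ i) ∩ Metric.sphere (c j) (ρ j))
        ((sphere_inter_countable _ _ _ _ (hne0 i)).union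
          (Set.countable_iUnion fun j => sphere_inter_countable _ _ _ _ (hne i j j.2)))
      refine ⟨A, hAU, hAm, ?_⟩
      have h0 : circleVM z0 R 1 A = 0 := circleVM_eq_zero _ _ _ hR hAm
          (Set.disjoint_left.2 fun w hw h => (hAs hw).2 (Or.inl ⟨h, (hAs hw).1⟩))
      have : ∀ j, j ≠ i → circleVM (c j) (ρ j) (-1) A = 0 := fun j hj =>
        circleVM_eq_zero _ _ _ (hρ j) hAm
          (Set.disjoint_left.2 fun w hw h =>
            (hAs hw).2 (Or.inr (Set.mem_iUnion.2 ⟨⟨j, hj.symm⟩, (hAs hw).1, h⟩)))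
      rw [hμ A hAm, h0, zero_add, tsum_eq_single i this]
      exact hA
end

section
/- Let X be a semiclassical Swiss cheese set. Then R(X) ≠ C(X); indeed R(X) is an essential uniform algebra on X. -/
open Metric

open Filter Topology MeasureTheory in
lemma sc_sphere_inter {c₁ c₂ : ℂ} {r₁ r₂ : ℝ} (h : c₁ ≠ c₂ ∨ r₁ ≠ r₂) :
    (sphere c₁ r₁ ∩ sphere c₂ r₂).Countable := by
  by_cases hc : c₁ = c₂
  · subst hc
    have hr : r₁ ≠ r₂ := by simpa using h
    convert Set.countable_empty
    ext z
    simp only [Set.mem_inter_iff, mem_sphere, Set.mem_empty_iff_false, iff_false, not_and]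
    intro h1 h2
    exact hr (h1.symm.trans h2)
  · by_cases hs : (sphere c₁ r₁ ∩ sphere c₂ r₂).Subsingleton
    · exact hs.finite.countable
    · rw [Set.not_subsingleton_iff] at hs
      obtain ⟨p₁, hp₁, p₂, hp₂, hp⟩ := hs
      refine Set.Countable.mono ?_ ((Set.countable_singleton p₂).insert p₁)
      intro p hpp
      have := EuclideanGeometry.eq_of_dist_eq_of_dist_eq_of_finrank_eq_two
        Complex.finrank_real_complex hc hp hp₁.1 hp₂.1 hpp.1 hp₁.2 hp₂.2 hpp.2
      simpa using this

/-- Abstract partial fraction induction. -/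
lemma sc_partial_fractions (X : Set ℂ) (G : (ℂ → ℂ) → Prop)
    (hadd : ∀ f g, G f → G g → G (fun z => f z + g z))
    (hmul : ∀ (a : ℂ) f, G f → G (fun z => a * f z))
    (hcongr : ∀ f g, Set.EqOn f g X → G f → G g)
    (hpoly : ∀ p : Polynomial ℂ, G (fun z => p.eval z))
    (hpole : ∀ a ∉ X, ∀ n : ℕ, G (fun z => ((z - a) ^ (n + 1))⁻¹))
    (p q : Polynomial ℂ) (hq : ∀ x ∈ X, q.eval x ≠ 0) :
    G (fun z => p.eval z / q.eval z) := by
  have key : ∀ n : ℕ, ∀ s : Multiset ℂ, s.card = n → (∀ a ∈ s, a ∉ X) → ∀ p : Polynomial ℂ,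
      G (fun z => p.eval z * ((s.map (fun a => z - a)).prod)⁻¹) := by
    intro n
    induction n with
    | zero =>
      intro s hs _ p
      rw [Multiset.card_eq_zero] at hs
      subst hs
      simpa using hpoly p
    | succ n ih =>
      intro s hs hsX p
      obtain ⟨a, ha⟩ := Multiset.card_pos_iff_exists_mem.1 (by omega : 0 < s.card)
      obtain ⟨t, rfl⟩ := Multiset.exists_cons_of_mem ha
      have ht : t.card = n := by simpa using hs
      have haX : a ∉ X := hsX a ha
      have htX : ∀ b ∈ t, b ∉ X := fun b hb => hsX b (Multiset.mem_cons_of_mem hb)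
      have h2 : G (fun z => (((a ::ₘ t).map (fun a => z - a)).prod)⁻¹) := by
        by_cases hall : ∀ b ∈ t, b = a
        · have : t = Multiset.replicate n a := Multiset.eq_replicate.2 ⟨ht, hall⟩
          rw [this]
          simpa [pow_succ, mul_comm] using hpole a haX n
        · push Not at hall
          obtain ⟨b, hb, hba⟩ := hall
          obtain ⟨u, rfl⟩ := Multiset.exists_cons_of_mem hb
          have hu : u.card + 1 = n := by simpa using ht
          have g1 := ih (a ::ₘ u) (by simpa using hu) (by
            intro x hx
            rcases Multiset.mem_cons.1 hx with rfl | hx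
            · exact haX
            · exact htX x (Multiset.mem_cons_of_mem hx)) 1
          have g2 := ih (b ::ₘ u) (by simpa using hu) htX 1
          refine hcongr _ _ ?_ (hadd _ _ (hmul (a - b)⁻¹ _ g1) (hmul (-(a - b)⁻¹) _ g2))
          intro z hz
          have hza : z - a ≠ 0 := fun h => haX (by rwa [← sub_eq_zero.1 h])
          have hzb : z - b ≠ 0 := fun h => htX b hb (by rwa [← sub_eq_zero.1 h])
          have hab : a - b ≠ 0 := sub_ne_zero.2 (Ne.symm hba)
          simp only [Multiset.map_cons, Multiset.prod_cons, Polynomial.eval_one, mul_inv]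
          generalize ((u.map (fun a => z - a)).prod)⁻¹ = w
          field_simp
          ring
      have h1 := ih t ht htX (p /ₘ (Polynomial.X - Polynomial.C a))
      refine hcongr _ _ ?_ (hadd _ _ h1 (hmul (p.eval a) _ h2))
      intro z hz
      have hza : z - a ≠ 0 := fun h => haX (by rwa [← sub_eq_zero.1 h])
      have hp := congrArg (Polynomial.eval z) (Polynomial.modByMonic_add_div p
        (Polynomial.X - Polynomial.C a))
      rw [Polynomial.modByMonic_X_sub_C_eq_C_eval] at hp
      simp only [Polynomial.eval_add, Polynomial.eval_mul, Polynomial.eval_sub, Polynomial.eval_X,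
        Polynomial.eval_C] at hp
      simp only [Multiset.map_cons, Multiset.prod_cons, mul_inv]
      rw [← hp]
      generalize ((t.map (fun a => z - a)).prod)⁻¹ = w
      field_simp
      ring
  have hqe : ∀ z, q.eval z = q.leadingCoeff * (q.roots.map (fun a => z - a)).prod := fun z =>
    (IsAlgClosed.splits q).eval_eq_prod_roots z
  have := hmul (q.leadingCoeff)⁻¹ _ (key _ q.roots rfl (by
    intro a ha haX
    exact hq a haX (Polynomial.isRoot_of_mem_roots ha)) p)
  refine hcongr _ _ ?_ this
  intro z hz
  simp only [hqe z, div_eq_mul_inv, mul_inv]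
  ring

open Filter Topology MeasureTheory in
lemma sc_core {K : Type} (X : Set ℂ) (hX : IsCompact X) (C : K → ℂ) (r : K → ℝ) (ε : K → ℂ)
    (hr : ∀ k, 0 < r k) (hε : ∀ k, ‖ε k‖ = 1) (hs : Summable r)
    (hsub : ∀ k, sphere (C k) (r k) ⊆ X)
    (hd : ∀ k l, k ≠ l → C k ≠ C l ∨ r k ≠ r l)
    (hw : ∀ a ∉ X, ∑' k, ε k * Set.indicator (ball (C k) (r k)) (fun _ => (1 : ℂ)) a = 0)
    (k0 : K) (p0 : ℂ) (hp0 : p0 ∈ sphere (C k0) (r k0)) (U : Set ℂ) (hU : IsOpen U)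
    (hpU : p0 ∈ U) :
    ∃ f : C(X, ℂ), f ∉ closure {f : C(X, ℂ) | ∃ p q : Polynomial ℂ,
      (∀ x : X, q.eval (x : ℂ) ≠ 0) ∧ ∀ x : X, f x = p.eval (x : ℂ) / q.eval (x : ℂ)} ∧
      ∀ x : X, (x : ℂ) ∉ U → f x = 0 := by
  classical
  have : CompactSpace X := isCompact_iff_compactSpace.1 hX
  set L : (ℂ → ℂ) → ℂ := fun F => ∑' k, ε k * ∮ z in C(C k, r k), F z with hL
  have hint : ∀ F : ℂ → ℂ, ContinuousOn F X → ∀ k, CircleIntegrable F (C k) (r k) :=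
    fun F hF k => (hF.mono (hsub k)).circleIntegrable (hr k).le
  have hbd : ∀ (F : ℂ → ℂ) (M : ℝ), (∀ x ∈ X, ‖F x‖ ≤ M) → ∀ k,
      ‖ε k * ∮ z in C(C k, r k), F z‖ ≤ r k * (2 * Real.pi * M) := by
    intro F M hM k
    rw [norm_mul, hε, one_mul]
    refine (circleIntegral.norm_integral_le_of_norm_le_const (hr k).le
      (fun z hz => hM z (hsub k hz))).trans (le_of_eq (by ring))
  have hsm : ∀ F : ℂ → ℂ, ContinuousOn F X →
      Summable (fun k => ε k * ∮ z in C(C k, r k), F z) := by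
    intro F hF
    obtain ⟨M, hM⟩ := hX.exists_bound_of_continuousOn hF
    exact Summable.of_norm_bounded (hs.mul_right _) (hbd F M hM)
  have hLle : ∀ (F : ℂ → ℂ) (M : ℝ), (∀ x ∈ X, ‖F x‖ ≤ M) →
      ‖L F‖ ≤ (∑' k, r k) * (2 * Real.pi * M) := by
    intro F M hM
    exact tsum_of_norm_bounded (hs.hasSum.mul_right _) (hbd F M hM)
  have hLadd : ∀ F G : ℂ → ℂ, ContinuousOn F X → ContinuousOn G X →
      L (fun z => F z + G z) = L F + L G := by
    intro F G hF hG
    simp only [hL]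
    rw [← (hsm F hF).tsum_add (hsm G hG)]
    refine tsum_congr fun k => ?_
    rw [circleIntegral.integral_add (hint F hF k) (hint G hG k), mul_add]
  have hLmul : ∀ (a : ℂ) (F : ℂ → ℂ), L (fun z => a * F z) = a * L F := by
    intro a F
    simp only [hL]
    rw [← tsum_mul_left]
    refine tsum_congr fun k => ?_
    rw [circleIntegral.integral_const_mul]
    ring
  have hLcongr : ∀ F G : ℂ → ℂ, Set.EqOn F G X → L F = L G := by
    intro F G h
    simp only [hL]
    refine tsum_congr fun k => ?_
    rw [circleIntegral.integral_congr (hr k).le (fun z hz => h (hsub k hz))]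
  have hrat : ∀ p q : Polynomial ℂ, (∀ x ∈ X, q.eval x ≠ 0) →
      ContinuousOn (fun z => p.eval z / q.eval z) X ∧ L (fun z => p.eval z / q.eval z) = 0 := by
    intro p q hq
    refine sc_partial_fractions X (fun F => ContinuousOn F X ∧ L F = 0) ?_ ?_ ?_ ?_ ?_ p q hq
    · rintro f g ⟨hf, hf'⟩ ⟨hg, hg'⟩
      exact ⟨hf.add hg, by rw [hLadd f g hf hg, hf', hg', add_zero]⟩
    · rintro a f ⟨hf, hf'⟩
      exact ⟨continuousOn_const.mul hf, by rw [hLmul, hf', mul_zero]⟩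
    · rintro f g h ⟨hf, hf'⟩
      exact ⟨hf.congr h.symm, by rw [← hLcongr f g h, hf']⟩
    · intro p
      refine ⟨p.continuous.continuousOn, ?_⟩
      simp only [hL]
      rw [← tsum_zero (β := K)]
      refine tsum_congr fun k => ?_
      rw [DiffContOnCl.circleIntegral_eq_zero (hr k).le p.differentiable.diffContOnCl, mul_zero]
    · intro a ha n
      have hne : ∀ z ∈ X, z - a ≠ 0 := fun z hz h => ha (by rwa [← sub_eq_zero.1 h])
      refine ⟨?_, ?_⟩
      · refine ContinuousOn.inv₀ (by fun_prop) fun z hz => pow_ne_zero _ (hne z hz)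
      · rcases Nat.eq_zero_or_pos n with rfl | hn
        · have : ∀ k, (∮ z in C(C k, r k), ((z - a) ^ (0 + 1))⁻¹) =
              2 * Real.pi * Complex.I * Set.indicator (ball (C k) (r k)) (fun _ => (1 : ℂ)) a := by
            intro k
            simp only [zero_add, pow_one]
            by_cases hak : a ∈ ball (C k) (r k)
            · rw [circleIntegral.integral_sub_inv_of_mem_ball hak]
              simp [hak]
            · rw [Set.indicator_of_notMem hak, mul_zero]
              have hak' : a ∉ closedBall (C k) (r k) := by
                intro h
                rw [← ball_union_sphere] at h
                rcases h with h | h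
                · exact hak h
                · exact ha (hsub k h)
              refine DiffContOnCl.circleIntegral_eq_zero (hr k).le ?_
              refine DifferentiableOn.diffContOnCl ?_
              rw [closure_ball _ (hr k).ne']
              intro z hz
              refine (DifferentiableAt.inv (by fun_prop) ?_).differentiableWithinAt
              intro h
              exact hak' (by rwa [← sub_eq_zero.1 h])
          simp only [hL, this]
          have h2 : ∀ k, ε k * (2 * Real.pi * Complex.I *
              Set.indicator (ball (C k) (r k)) (fun _ => (1 : ℂ)) a) =
              2 * Real.pi * Complex.I * (ε k *
              Set.indicator (ball (C k) (r k)) (fun _ => (1 : ℂ)) a) := fun k => by ring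
          simp only [h2]
          rw [tsum_mul_left, hw a ha, mul_zero]
        · simp only [hL]
          rw [← tsum_zero (β := K)]
          refine tsum_congr fun k => ?_
          have := circleIntegral.integral_sub_zpow_of_ne (n := -((n : ℤ) + 1)) (by omega)
            (C k) a (r k)
          have h3 : ∀ z : ℂ, ((z - a) ^ (n + 1))⁻¹ = (z - a) ^ (-((n : ℤ) + 1)) := by
            intro z
            rw [zpow_neg]
            norm_cast
          simp only [h3, this, mul_zero]
  -- elements of the closure are annihilated
  have hann : ∀ f : C(X, ℂ), f ∈ closure {f : C(X, ℂ) | ∃ p q : Polynomial ℂ,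
      (∀ x : X, q.eval (x : ℂ) ≠ 0) ∧ ∀ x : X, f x = p.eval (x : ℂ) / q.eval (x : ℂ)} →
      ∀ F : ℂ → ℂ, Continuous F → (∀ x : X, f x = F x) → L F = 0 := by
    intro f hf F hF hfF
    have h1 : ∀ δ > 0, ‖L F‖ ≤ (∑' k, r k) * (2 * Real.pi * δ) := by
      intro δ hδ
      obtain ⟨g, ⟨p, q, hq, hg⟩, hfg⟩ := Metric.mem_closure_iff.1 hf δ hδ
      obtain ⟨hc, hz⟩ := hrat p q (fun x hx => hq ⟨x, hx⟩)
      have : L F = L (fun z => F z + (-1) * (p.eval z / q.eval z)) := by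
        rw [hLadd F (fun z => (-1) * (p.eval z / q.eval z)) hF.continuousOn
          (continuousOn_const.mul hc), hLmul, hz, mul_zero, add_zero]
      rw [this]
      apply hLle
      intro x hx
      have h4 := (ContinuousMap.dist_apply_le_dist (f := f) (g := g) ⟨x, hx⟩).trans hfg.le
      rw [dist_eq_norm, hfF, hg] at h4
      simpa [sub_eq_add_neg] using h4
    have h2 : Tendsto (fun δ : ℝ => (∑' k, r k) * (2 * Real.pi * δ)) (𝓝[>] 0) (𝓝 0) := by
      have : Continuous (fun δ : ℝ => (∑' k, r k) * (2 * Real.pi * δ)) := by fun_prop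
      have := (this.tendsto 0).mono_left (nhdsWithin_le_nhds (s := Set.Ioi 0))
      simpa using this
    have h3 : ‖L F‖ ≤ 0 := ge_of_tendsto h2 (by
      filter_upwards [self_mem_nhdsWithin] with δ hδ using h1 δ hδ)
    exact norm_le_zero_iff.1 h3
  -- test functions
  obtain ⟨δ, hδ, hδU⟩ := Metric.isOpen_iff.1 hU p0 hpU
  set χ : ℂ → ℝ := fun z => max 0 (1 - dist z p0 / δ) with hχ
  have hχc : Continuous χ := by fun_prop
  have hχ0 : ∀ z, 0 ≤ χ z := fun z => le_max_left _ _
  have hχU : ∀ z, z ∉ U → χ z = 0 := by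
    intro z hz
    have : δ ≤ dist z p0 := by
      by_contra h
      exact hz (hδU (by simpa using h))
    have : 1 ≤ dist z p0 / δ := by rwa [le_div_iff₀ hδ, one_mul]
    simp only [hχ]
    exact max_eq_left (by linarith)
  set t : ℂ → ℝ := fun z => (1 + |dist z (C k0) - r k0|)⁻¹ with ht
  have htc : Continuous t := by
    refine Continuous.inv₀ (by fun_prop) fun z => ?_
    positivity
  have ht0 : ∀ z, 0 ≤ t z := fun z => by positivity
  have ht1 : ∀ z, t z ≤ 1 := fun z => inv_le_one_of_one_le₀ (by linarith [abs_nonneg (dist z (C k0) - r k0)])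
  set h : ℂ → ℂ := fun z => (χ z : ℂ) * (starRingEnd ℂ) (z - C k0) with hh
  have hhc : Continuous h := by
    refine (Complex.continuous_ofReal.comp hχc).mul (Complex.continuous_conj.comp (by fun_prop))
  set g : ℕ → ℂ → ℂ := fun n z => (t z : ℂ) ^ n * h z with hg
  have hgc : ∀ n, Continuous (g n) := fun n =>
    ((Complex.continuous_ofReal.comp htc).pow n).mul hhc
  have hgh : ∀ n z, ‖g n z‖ ≤ ‖h z‖ := by
    intro n z
    simp only [hg, norm_mul, norm_pow, Complex.norm_real, Real.norm_eq_abs, abs_of_nonneg (ht0 z)]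
    exact mul_le_of_le_one_left (norm_nonneg _) (pow_le_one₀ (ht0 z) (ht1 z))
  obtain ⟨M, hM⟩ := hX.exists_bound_of_continuousOn hhc.continuousOn
  have hv : (∮ z in C(C k0, r k0), h z) ≠ 0 := by
    have hpos : 0 < ∫ θ in (0 : ℝ)..2 * Real.pi, χ (circleMap (C k0) (r k0) θ) := by
      refine intervalIntegral.integral_pos Real.two_pi_pos
        (hχc.comp (continuous_circleMap _ _)).continuousOn (fun θ _ => hχ0 _) ?_
      have : p0 ∈ circleMap (C k0) (r k0) '' Set.Ioc 0 (2 * Real.pi) := by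
        rw [image_circleMap_Ioc, abs_of_pos (hr k0)]
        exact hp0
      obtain ⟨θ, hθ, hθp⟩ := this
      refine ⟨θ, Set.Ioc_subset_Icc_self hθ, ?_⟩
      rw [hθp]
      simp [hχ]
    have : (∮ z in C(C k0, r k0), h z) =
        (Complex.I * (r k0) ^ 2) * ((∫ θ in (0 : ℝ)..2 * Real.pi,
          χ (circleMap (C k0) (r k0) θ) : ℝ) : ℂ) := by
      rw [circleIntegral, ← intervalIntegral.integral_ofReal,
        ← intervalIntegral.integral_const_mul]
      refine intervalIntegral.integral_congr fun θ _ => ?_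
      simp only [hh, deriv_circleMap, smul_eq_mul, circleMap_sub_center]
      have h5 : circleMap 0 (r k0) θ * (starRingEnd ℂ) (circleMap 0 (r k0) θ) = (r k0 : ℂ) ^ 2 := by
        rw [Complex.mul_conj, Complex.normSq_eq_norm_sq, norm_circleMap_zero, sq_abs]
        push_cast
        rfl
      linear_combination (Complex.I * (χ (circleMap (C k0) (r k0) θ) : ℂ)) * h5
    rw [this]
    refine mul_ne_zero (mul_ne_zero Complex.I_ne_zero (pow_ne_zero _ ?_)) ?_
    · exact Complex.ofReal_ne_zero.2 (hr k0).ne'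
    · exact Complex.ofReal_ne_zero.2 hpos.ne'
  have hlim : Tendsto (fun n => L (g n)) atTop
      (𝓝 (∑' k, if k = k0 then ε k0 * ∮ z in C(C k0, r k0), h z else 0)) := by
    refine tendsto_tsum_of_dominated_convergence (hs.mul_right (2 * Real.pi * M)) ?_ ?_
    · intro k
      by_cases hk : k = k0
      · subst hk
        simp only [if_true]
        have : ∀ n, (∮ z in C(C k, r k), g n z) = ∮ z in C(C k, r k), h z := by
          intro n
          refine circleIntegral.integral_congr (hr k).le fun z hz => ?_
          have : dist z (C k) = r k := hz
          simp [hg, ht, this]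
        simp only [this]
        exact tendsto_const_nhds
      · simp only [hk, if_false]
        rw [← mul_zero (ε k)]
        refine Tendsto.const_mul _ ?_
        have hae : ∀ᵐ θ : ℝ, circleMap (C k) (r k) θ ∉ sphere (C k) (r k) ∩ sphere (C k0) (r k0) := by
          have := ((sc_sphere_inter (hd k k0 hk)).preimage_circleMap (C k)
            (hr k).ne').measure_zero volume
          exact measure_eq_zero_iff_ae_notMem.mp this
        have h0 : (0 : ℂ) = ∫ θ in (0 : ℝ)..2 * Real.pi, (0 : ℂ) := by simp
        rw [h0]
        simp only [circleIntegral]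
        refine intervalIntegral.tendsto_integral_filter_of_dominated_convergence
          (fun _ => r k * M) ?_ ?_ ?_ ?_
        · refine Eventually.of_forall fun n => Continuous.aestronglyMeasurable ?_
          simp only [deriv_circleMap]
          have := continuous_circleMap (C k) (r k)
          have h2 := continuous_circleMap 0 (r k)
          have h3 := hgc n
          fun_prop
        · refine Eventually.of_forall fun n => Eventually.of_forall fun θ _ => ?_
          simp only [deriv_circleMap, norm_smul, norm_mul, norm_circleMap_zero, Complex.norm_I,
            mul_one, abs_of_pos (hr k)]
          refine mul_le_mul_of_nonneg_left ((hgh n _).trans (hM _ (hsub k ?_))) (hr k).le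
          exact circleMap_mem_sphere _ (hr k).le _
        · exact intervalIntegrable_const
        · filter_upwards [hae] with θ hθ _
          have hθ' : circleMap (C k) (r k) θ ∉ sphere (C k0) (r k0) := fun h6 =>
            hθ ⟨circleMap_mem_sphere _ (hr k).le _, h6⟩
          generalize circleMap (C k) (r k) θ = w at hθ'
          have h7 : t w < 1 := by
            refine inv_lt_one_of_one_lt₀ ?_
            have : 0 < |dist w (C k0) - r k0| := abs_pos.2 (sub_ne_zero.2 hθ')
            linarith
          have h8 : Tendsto (fun n : ℕ => (t w : ℂ) ^ n) atTop (𝓝 0) := by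
            refine tendsto_pow_atTop_nhds_zero_of_norm_lt_one ?_
            rwa [Complex.norm_real, Real.norm_eq_abs, abs_of_nonneg (ht0 w)]
          have h9 := (h8.mul_const (h w)).const_smul (deriv (circleMap (C k) (r k)) θ)
          simpa [hg] using h9
    · exact Eventually.of_forall fun n k => hbd _ M (fun x hx => (hgh n x).trans (hM x hx)) k
  rw [tsum_ite_eq] at hlim
  have hne : ε k0 * (∮ z in C(C k0, r k0), h z) ≠ 0 := by
    refine mul_ne_zero ?_ hv
    intro h6
    have := hε k0
    simp [h6] at this
  obtain ⟨n, hn⟩ := (hlim.eventually_ne hne).exists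
  refine ⟨⟨fun x => g n x, (hgc n).comp continuous_subtype_val⟩, ?_, ?_⟩
  · intro hmem
    exact hn (hann _ hmem (g n) (hgc n) (fun x => rfl))
  · intro x hx
    simp [hg, hh, hχU x hx]

lemma sc_dichotomy (x c : ℂ) (δ r : ℝ) (hδ : 0 < δ)
    (h : ∀ z ∈ ball x δ, z ∉ sphere c r) :
    ball x δ ⊆ ball c r ∨ ball x δ ⊆ (closedBall c r)ᶜ := by
  have hpre : IsPreconnected (ball x δ) := (convex_ball x δ).isPreconnected
  have hdis : Disjoint (ball c r) (closedBall c r)ᶜ :=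
    Set.disjoint_compl_right_iff_subset.2 ball_subset_closedBall
  have hcov : ball x δ ⊆ ball c r ∪ (closedBall c r)ᶜ := by
    intro z hz
    by_cases hzc : z ∈ closedBall c r
    · rw [← ball_union_sphere] at hzc
      rcases hzc with hzc | hzc
      · exact Or.inl hzc
      · exact absurd hzc (h z hz)
    · exact Or.inr hzc
  rcases hcov (mem_ball_self hδ) with hx | hx
  · exact Or.inl (hpre.subset_left_of_subset_union isOpen_ball isClosed_closedBall.isOpen_compl
      hdis hcov ⟨x, mem_ball_self hδ, hx⟩)
  · exact Or.inr (hpre.subset_right_of_subset_union isOpen_ball isClosed_closedBall.isOpen_compl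
      hdis hcov ⟨x, mem_ball_self hδ, hx⟩)

theorem semiclassical_RX_essential {ι : Type} [Countable ι]
    (z0 : ℂ) (R : ℝ) (c : ι → ℂ) (ρ : ι → ℝ) (hR : 0 < R) (hρ : ∀ i, 0 < ρ i)
    (hdisj : ∀ i j, i ≠ j → Disjoint (ball (c i) (ρ i)) (ball (c j) (ρ j)))
    (hsub : ∀ i, ball (c i) (ρ i) ⊆ closedBall z0 R)
    (hproper : ∀ i, closedBall (c i) (ρ i) ⊂ closedBall z0 R)
    (hsum : Summable ρ)
    (X : Set ℂ) (hX : X = closedBall z0 R \ ⋃ i, ball (c i) (ρ i))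
    (RX : Set C(X, ℂ))
    (hRX : RX = closure {f : C(X, ℂ) | ∃ p q : Polynomial ℂ,
      (∀ x : X, q.eval (x : ℂ) ≠ 0) ∧ ∀ x : X, f x = p.eval (x : ℂ) / q.eval (x : ℂ)}) :
    RX ≠ Set.univ ∧
      ∀ Y : Set X, IsClosed Y → Y.Nonempty → Y ≠ Set.univ →
        ∃ f : C(X, ℂ), f ∉ RX ∧ ∀ y ∈ Y, f y = 0 := by
  classical
  have hXc : IsCompact X := by
    rw [hX]
    exact (isCompact_closedBall z0 R).diff (isOpen_iUnion fun i => isOpen_ball)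
  have hball : ∀ i, ball (c i) (ρ i) ⊆ ball z0 R := by
    intro i
    have := interior_maximal (hsub i) isOpen_ball
    rwa [interior_closedBall _ hR.ne'] at this
  have hmem : ∀ z, z ∈ X ↔ z ∈ closedBall z0 R ∧ ∀ i, z ∉ ball (c i) (ρ i) := by
    intro z
    rw [hX]
    simp only [Set.mem_sdiff, Set.mem_iUnion, not_exists]
  let C : Option ι → ℂ := fun k => k.elim z0 c
  let r : Option ι → ℝ := fun k => k.elim R ρ
  let ε : Option ι → ℂ := fun k => k.elim 1 (fun _ => -1)
  have hr : ∀ k, 0 < r k := by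
    rintro (_ | i)
    · exact hR
    · exact hρ i
  have hε : ∀ k, ‖ε k‖ = 1 := by
    rintro (_ | i) <;> simp [ε]
  have hs : Summable r := by
    rw [← (Equiv.optionEquivSumPUnit.{0, 0} ι).symm.summable_iff]
    refine Summable.sum _ ?_ ?_
    · exact hsum
    · exact Summable.of_finite
  have hsph : ∀ k, sphere (C k) (r k) ⊆ X := by
    rintro (_ | i) z hz
    · change z ∈ sphere z0 R at hz
      refine (hmem z).2 ⟨sphere_subset_closedBall hz, fun i hi => ?_⟩
      have h1 : dist z z0 < R := hball i hi
      have h2 : dist z z0 = R := hz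
      linarith
    · change z ∈ sphere (c i) (ρ i) at hz
      refine (hmem z).2 ⟨(hproper i).1 (sphere_subset_closedBall hz), fun j hj => ?_⟩
      by_cases hij : i = j
      · subst hij
        have h1 : dist z (c i) < ρ i := hj
        have h2 : dist z (c i) = ρ i := hz
        linarith
      · have := (hdisj i j hij).closure_left isOpen_ball
        rw [closure_ball _ (hρ i).ne'] at this
        exact Set.disjoint_left.1 this (sphere_subset_closedBall hz) hj
  have hne : ∀ i, z0 ≠ c i ∨ R ≠ ρ i := by
    intro i
    by_contra hcon
    push Not at hcon
    have := hproper i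
    rw [← hcon.1, ← hcon.2] at this
    exact (ssubset_irrefl _) this
  have hd : ∀ k l, k ≠ l → C k ≠ C l ∨ r k ≠ r l := by
    rintro (_ | i) (_ | j) hkl
    · exact absurd rfl hkl
    · exact hne j
    · exact (hne i).imp Ne.symm Ne.symm
    · left
      intro hcc
      change c i = c j at hcc
      have hij : i ≠ j := fun h => hkl (by rw [h])
      refine Set.disjoint_left.1 (hdisj i j hij) (mem_ball_self (hρ i)) ?_
      rw [hcc]
      exact mem_ball_self (hρ j)
  have hw : ∀ a ∉ X, ∑' k, ε k * Set.indicator (ball (C k) (r k)) (fun _ => (1 : ℂ)) a = 0 := by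
    intro a ha
    by_cases haR : a ∈ closedBall z0 R
    · have : ∃ i, a ∈ ball (c i) (ρ i) := by
        by_contra hcon
        push Not at hcon
        exact ha ((hmem a).2 ⟨haR, hcon⟩)
      obtain ⟨i, hi⟩ := this
      have h0 : a ∈ ball (C none) (r none) := hball i hi
      have h1 : a ∈ ball (C (some i)) (r (some i)) := hi
      rw [tsum_eq_sum (s := {none, some i}), Finset.sum_pair (by simp),
        Set.indicator_of_mem h0, Set.indicator_of_mem h1]
      · simp [ε]
      · rintro (_ | j) hk
        · simp at hk
        · have hij : i ≠ j := by
            rintro rfl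
            simp at hk
          have : a ∉ ball (C (some j)) (r (some j)) := Set.disjoint_left.1 (hdisj i j hij) hi
          rw [Set.indicator_of_notMem this, mul_zero]
    · rw [← tsum_zero (β := Option ι)]
      refine tsum_congr fun k => ?_
      have : a ∉ ball (C k) (r k) := by
        rcases k with _ | i
        · exact fun h => haR (ball_subset_closedBall h)
        · exact fun h => haR (hsub i h)
      rw [Set.indicator_of_notMem this, mul_zero]
  have main : ∀ Y : Set X, IsClosed Y → Y ≠ Set.univ →
        ∃ f : C(X, ℂ), f ∉ RX ∧ ∀ y ∈ Y, f y = 0 := by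
    intro Y hY hYu
    rw [hRX]
    obtain ⟨x, hx⟩ := (Set.ne_univ_iff_exists_notMem Y).1 hYu
    obtain ⟨O, hO, hOY⟩ := isOpen_induced_iff.1 hY.isOpen_compl
    have hxO : (x : ℂ) ∈ O := by
      have : x ∈ Yᶜ := hx
      rw [← hOY] at this
      exact this
    have hYO : ∀ y ∈ Y, (y : ℂ) ∉ O := by
      intro y hy hyO
      have : y ∈ Yᶜ := by
        rw [← hOY]
        exact hyO
      exact this hy
    obtain ⟨δ, hδ, hδO⟩ := Metric.isOpen_iff.1 hO x hxO
    by_cases hmeet : ∃ k, ∃ z ∈ ball (x : ℂ) δ, z ∈ sphere (C k) (r k)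
    · obtain ⟨k, z, hz, hzk⟩ := hmeet
      obtain ⟨f, hf, hf0⟩ := sc_core X hXc C r ε hr hε hs hsph hd hw k z hzk O hO (hδO hz)
      exact ⟨f, hf, fun y hy => hf0 y (hYO y hy)⟩
    · push Not at hmeet
      have hxX := (hmem x).1 x.2
      have hsubX : ball (x : ℂ) δ ⊆ X := by
        intro z hz
        refine (hmem z).2 ⟨?_, fun i hi => ?_⟩
        · rcases sc_dichotomy x z0 δ R hδ (hmeet none) with h | h
          · exact ball_subset_closedBall (h hz)
          · exact absurd hxX.1 (h (mem_ball_self hδ))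
        · rcases sc_dichotomy x (c i) δ (ρ i) hδ (hmeet (some i)) with h | h
          · exact hxX.2 i (h (mem_ball_self hδ))
          · exact h hz (ball_subset_closedBall hi)
      have hcb : closedBall (x : ℂ) (δ / 2) ⊆ ball (x : ℂ) δ :=
        closedBall_subset_ball (by linarith)
      have hp : (x : ℂ) + ((δ / 2 : ℝ) : ℂ) ∈ sphere (x : ℂ) (δ / 2) := by
        rw [mem_sphere, dist_eq_norm, add_sub_cancel_left, Complex.norm_real, Real.norm_eq_abs,
          abs_of_pos (by linarith)]
      obtain ⟨f, hf, hf0⟩ := sc_core (K := Unit) X hXc (fun _ => x) (fun _ => δ / 2) (fun _ => 1)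
        (fun _ => by linarith) (fun _ => by simp) (Summable.of_finite)
        (fun _ => sphere_subset_closedBall.trans (hcb.trans hsubX))
        (fun k l hkl => absurd (Subsingleton.elim k l) hkl)
        (by
          intro a ha
          have : a ∉ ball (x : ℂ) (δ / 2) := fun h =>
            ha (hsubX (hcb (ball_subset_closedBall h)))
          simp only [Set.indicator_of_notMem this, mul_zero, tsum_zero])
        () _ hp O hO (hδO (hcb (sphere_subset_closedBall hp)))
      exact ⟨f, hf, fun y hy => hf0 y (hYO y hy)⟩
  refine ⟨?_, fun Y hY _ hYu => main Y hY hYu⟩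
  have hpX : z0 + (R : ℂ) ∈ X := by
    refine hsph none ?_
    change z0 + (R : ℂ) ∈ sphere z0 R
    rw [mem_sphere, dist_eq_norm, add_sub_cancel_left, Complex.norm_real, Real.norm_eq_abs,
      abs_of_pos hR]
  obtain ⟨f, hf, -⟩ := main ∅ isClosed_empty (by
    intro h
    have : (⟨_, hpX⟩ : X) ∈ (∅ : Set X) := by
      rw [h]
      trivial
    exact this)
  intro h
  exact hf (by rw [h]; trivial)
end
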